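/- arXiv:1703.04675 — 2 statements merged into one kernel-verified Lean document; each statement's English description precedes it below -/
import Mathlib

section
/- There is a constant C_1 = C_1(C_d, C_P, λ) ≥ 1 such that for any G ⊂ X and ε > 0 there exists an open set V ⊃ G with capa_1(V) ≤ C_1(capa_1(G) + ε) and P(V,X) ≤ C_1(capa_1(G) + ε). -/
open MeasureTheory Filter Metric Set
open scoped Topology ENNReal NNReal symmDiff

noncomputable section

namespace PaperBV

/-- A rectifiable curve parametrized by arc-length: a `1`-Lipschitz map on `[0, len]`. -/
structure Curve (X : Type*) [MetricSpace X] where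
  len : ℝ
  len_nonneg : 0 ≤ len
  toFun : ℝ → X
  lip : LipschitzOnWith 1 toFun (Set.Icc 0 len)

variable {X : Type*} [MetricSpace X] [MeasurableSpace X] [BorelSpace X]

/-- The curve lies in the set `A`. -/
def Curve.In (γ : Curve X) (A : Set X) : Prop :=
  ∀ t ∈ Set.Icc (0 : ℝ) γ.len, γ.toFun t ∈ A

/-- The curve integral `∫_γ g ds` of a nonnegative function, for an
arc-length parametrized curve. -/
def Curve.integral (γ : Curve X) (g : X → ℝ≥0∞) : ℝ≥0∞ :=
  ∫⁻ t in Set.Icc (0 : ℝ) γ.len, g (γ.toFun t)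

/-- The upper gradient inequality `|u(x) - u(y)| ≤ ∫_γ g ds` along the curve `γ`,
where `x, y` are the endpoints of `γ`. -/
def UGIneq (u : X → ℝ) (g : X → ℝ≥0∞) (γ : Curve X) : Prop :=
  ENNReal.ofReal |u (γ.toFun 0) - u (γ.toFun γ.len)| ≤ γ.integral g

/-- `g` is an upper gradient of `u` on `X`: `g` is nonnegative (automatic in `ℝ≥0∞`),
Borel, and the upper gradient inequality holds along every curve. -/
def IsUpperGradient (u : X → ℝ) (g : X → ℝ≥0∞) : Prop :=
  Measurable g ∧ ∀ γ : Curve X, UGIneq u g γ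

/-- A family of curves has zero `1`-modulus: there is a nonnegative Borel function
`ρ ∈ L¹(X)` whose curve integral is infinite along every curve of the family. -/
def ZeroMod (μ : Measure X) (Γ : Set (Curve X)) : Prop :=
  ∃ ρ : X → ℝ≥0∞, Measurable ρ ∧ (∫⁻ x, ρ x ∂μ) < ∞ ∧ ∀ γ ∈ Γ, γ.integral ρ = ∞

/-- `g` is a `1`-weak upper gradient of `u` in `A`: `g` is nonnegative, `μ`-measurable,
and the upper gradient inequality holds along `1`-a.e. curve in `A`. -/
def IsWeakUpperGradientOn (μ : Measure X) (u : X → ℝ) (g : X → ℝ≥0∞) (A : Set X) : Prop :=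
  AEMeasurable g μ ∧ ZeroMod μ {γ : Curve X | γ.In A ∧ ¬ UGIneq u g γ}

/-- A nonnegative function `g` belongs to `L¹_loc(A)`. -/
def LIntegrableLocOn (μ : Measure X) (g : X → ℝ≥0∞) (A : Set X) : Prop :=
  ∀ x ∈ A, ∃ r > (0 : ℝ), (∫⁻ y in A ∩ Metric.ball x r, g y ∂μ) < ∞

/-- `g` is the minimal `1`-weak upper gradient of `u` in `A`: a `1`-weak upper gradient
satisfying `g ≤ g'` `μ`-a.e. in `A` for every `1`-weak upper gradient `g' ∈ L¹_loc(A)`. -/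
def IsMinimalWUG (μ : Measure X) (u : X → ℝ) (g : X → ℝ≥0∞) (A : Set X) : Prop :=
  IsWeakUpperGradientOn μ u g A ∧
    ∀ g' : X → ℝ≥0∞, IsWeakUpperGradientOn μ u g' A → LIntegrableLocOn μ g' A →
      ∀ᵐ x ∂(μ.restrict A), g x ≤ g' x

/-- The Newtonian norm `‖u‖_{N^{1,1}(A)}` (valued in `ℝ≥0∞`). -/
def NNorm (μ : Measure X) (A : Set X) (u : X → ℝ) : ℝ≥0∞ :=
  (∫⁻ x in A, ENNReal.ofReal |u x| ∂μ) +
    ⨅ (g : X → ℝ≥0∞) (_ : IsWeakUpperGradientOn μ u g A), ∫⁻ x in A, g x ∂μ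

/-- `u ∈ N^{1,1}(A)`. -/
def MemN11 (μ : Measure X) (A : Set X) (u : X → ℝ) : Prop :=
  NNorm μ A u < ∞

/-- `u ∈ N^{1,1}_loc(A)`: every point of `A` has a ball `B` with `u ∈ N^{1,1}(A ∩ B)`. -/
def MemN11Loc (μ : Measure X) (A : Set X) (u : X → ℝ) : Prop :=
  ∀ x ∈ A, ∃ r > (0 : ℝ), NNorm μ (A ∩ Metric.ball x r) u < ∞

/-- `u ∈ N^{1,1}(Ω')` for every bounded open `Ω' ⊆ X`. -/
def MemN11LocBounded (μ : Measure X) (u : X → ℝ) : Prop :=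
  ∀ Ω' : Set X, IsOpen Ω' → Bornology.IsBounded Ω' → NNorm μ Ω' u < ∞

/-- `u ∈ N^{1,1}_0(Ω)`: `u ∈ N^{1,1}(X)` and `u = 0` outside `Ω`. -/
def MemN110 (μ : Measure X) (Ω : Set X) (u : X → ℝ) : Prop :=
  MemN11 μ Set.univ u ∧ ∀ x ∉ Ω, u x = 0

/-- The `1`-capacity `capa₁(A) = inf {‖u‖_{N^{1,1}(X)} : u ∈ N^{1,1}(X), u ≥ 1 on A}`. -/
def capa1 (μ : Measure X) (A : Set X) : ℝ≥0∞ :=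
  ⨅ (u : X → ℝ) (_ : MemN11 μ Set.univ u) (_ : ∀ x ∈ A, 1 ≤ u x), NNorm μ Set.univ u

/-- `U` is `1`-quasiopen: for every `ε > 0` there is an open `G` with `capa₁(G) < ε`
such that `U ∪ G` is open. -/
def QuasiOpen (μ : Measure X) (U : Set X) : Prop :=
  ∀ ε : ℝ, 0 < ε → ∃ G : Set X, IsOpen G ∧ capa1 μ G < ENNReal.ofReal ε ∧ IsOpen (U ∪ G)

/-- `u ∈ L¹_loc(A)`. -/
def MemL1Loc (μ : Measure X) (A : Set X) (u : X → ℝ) : Prop :=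
  AEMeasurable u (μ.restrict A) ∧
    ∀ x ∈ A, ∃ r > (0 : ℝ), (∫⁻ y in A ∩ Metric.ball x r, ENNReal.ofReal |u y| ∂μ) < ∞

/-- `v i → u` in `L¹_loc(A)`: every `x ∈ A` has a ball `B` with `v i → u` in `L¹(A ∩ B)`. -/
def L1LocConv (μ : Measure X) (A : Set X) (v : ℕ → X → ℝ) (u : X → ℝ) : Prop :=
  ∀ x ∈ A, ∃ r > (0 : ℝ),
    Filter.Tendsto (fun i => ∫⁻ y in A ∩ Metric.ball x r, ENNReal.ofReal |v i y - u y| ∂μ)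
      Filter.atTop (𝓝 0)

/-- `u` is locally Lipschitz on `Ω`. -/
def LocLipOn (u : X → ℝ) (Ω : Set X) : Prop :=
  ∀ x ∈ Ω, ∃ r > (0 : ℝ), ∃ K : ℝ≥0, LipschitzOnWith K u (Ω ∩ Metric.ball x r)

/-- The total variation `‖Du‖(Ω)` of `u` in an open set `Ω`: the infimum of
`liminf_i ∫_Ω g_{v i} dμ` over sequences of locally Lipschitz functions `v i → u`
in `L¹_loc(Ω)`, where `g_{v i}` is the minimal `1`-weak upper gradient of `v i` in `Ω`. -/
def tvOpen (μ : Measure X) (Ω : Set X) (u : X → ℝ) : ℝ≥0∞ :=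
  ⨅ (v : ℕ → X → ℝ) (g : ℕ → X → ℝ≥0∞) (_ : ∀ i, LocLipOn (v i) Ω)
    (_ : ∀ i, IsMinimalWUG μ (v i) (g i) Ω) (_ : L1LocConv μ Ω v u),
    Filter.liminf (fun i => ∫⁻ x in Ω, g i x ∂μ) Filter.atTop

/-- The total variation `‖Du‖(A)` of `u` in an arbitrary set `A`:
`inf {‖Du‖(Ω) : Ω ⊇ A open}`. -/
def tv (μ : Measure X) (A : Set X) (u : X → ℝ) : ℝ≥0∞ :=
  ⨅ (Ω : Set X) (_ : IsOpen Ω) (_ : A ⊆ Ω), tvOpen μ Ω u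

/-- The perimeter `P(E, A) = ‖Dχ_E‖(A)` for arbitrary `A`. -/
def perim (μ : Measure X) (E A : Set X) : ℝ≥0∞ :=
  tv μ A (Set.indicator E (fun _ => (1 : ℝ)))

/-- The perimeter `P(E, Ω) = ‖Dχ_E‖(Ω)` for open `Ω`. -/
def perimOpen (μ : Measure X) (E Ω : Set X) : ℝ≥0∞ :=
  tvOpen μ Ω (Set.indicator E (fun _ => (1 : ℝ)))

/-- The measure `μ` is doubling with constant `Cd`. -/
def Doubling (μ : Measure X) (Cd : ℝ) : Prop :=
  1 ≤ Cd ∧ ∀ (x : X) (r : ℝ), 0 < r →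
    0 < μ (Metric.ball x (2 * r)) ∧
      μ (Metric.ball x (2 * r)) ≤ ENNReal.ofReal Cd * μ (Metric.ball x r) ∧
      μ (Metric.ball x r) < ∞

/-- The space supports a `(1,1)`-Poincaré inequality with constants `CP, lam`. -/
def Poincare (μ : Measure X) (CP lam : ℝ) : Prop :=
  1 ≤ CP ∧ 1 ≤ lam ∧ ∀ (x : X) (r : ℝ), 0 < r → ∀ (u : X → ℝ) (g : X → ℝ≥0∞),
    MemL1Loc μ Set.univ u → IsUpperGradient u g →
      ENNReal.ofReal (⨍ y in Metric.ball x r, |u y - ⨍ z in Metric.ball x r, u z ∂μ| ∂μ)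
        ≤ ENNReal.ofReal (CP * r) *
            ((∫⁻ y in Metric.ball x (lam * r), g y ∂μ) / μ (Metric.ball x (lam * r)))

/-- The restricted spherical Hausdorff content of codimension one. -/
def HR (μ : Measure X) (R : ℝ) (A : Set X) : ℝ≥0∞ :=
  ⨅ (c : ℕ → X) (r : ℕ → ℝ) (_ : ∀ i, 0 < r i ∧ r i ≤ R)
    (_ : A ⊆ ⋃ i, Metric.ball (c i) (r i)),
    ∑' i, μ (Metric.ball (c i) (r i)) / ENNReal.ofReal (r i)

/-- The codimension-one Hausdorff measure `H(A) = lim_{R → 0} H_R(A)`. -/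
def Hcodim (μ : Measure X) (A : Set X) : ℝ≥0∞ :=
  ⨆ (R : ℝ) (_ : 0 < R), HR μ R A

/-- The lower approximate limit `u^∧`. -/
def lowerApprox (μ : Measure X) (u : X → ℝ) (x : X) : EReal :=
  sSup ((fun t : ℝ => (t : EReal)) ''
    {t : ℝ | Filter.Tendsto
      (fun r => μ (Metric.ball x r ∩ {y | u y < t}) / μ (Metric.ball x r))
      (𝓝[>] (0 : ℝ)) (𝓝 0)})

/-- The upper approximate limit `u^∨`. -/
def upperApprox (μ : Measure X) (u : X → ℝ) (x : X) : EReal :=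
  sInf ((fun t : ℝ => (t : EReal)) ''
    {t : ℝ | Filter.Tendsto
      (fun r => μ (Metric.ball x r ∩ {y | t < u y}) / μ (Metric.ball x r))
      (𝓝[>] (0 : ℝ)) (𝓝 0)})

/-- `u ∈ BV_loc(X)`: `u ∈ L¹_loc(X)` with `‖Du‖(Ω') < ∞` for every bounded open `Ω'`. -/
def MemBVLoc (μ : Measure X) (u : X → ℝ) : Prop :=
  MemL1Loc μ Set.univ u ∧
    ∀ Ω' : Set X, IsOpen Ω' → Bornology.IsBounded Ω' → tvOpen μ Ω' u < ∞

/-- The measure-theoretic interior `I_E`. -/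
def mInterior (μ : Measure X) (E : Set X) : Set X :=
  {x | Filter.Tendsto (fun r => μ (Metric.ball x r \ E) / μ (Metric.ball x r))
    (𝓝[>] (0 : ℝ)) (𝓝 0)}

/-- The measure-theoretic exterior `O_E`. -/
def mExterior (μ : Measure X) (E : Set X) : Set X :=
  {x | Filter.Tendsto (fun r => μ (Metric.ball x r ∩ E) / μ (Metric.ball x r))
    (𝓝[>] (0 : ℝ)) (𝓝 0)}

/-- The measure-theoretic boundary `∂*E`: the points where both `E` and its complement
have positive upper density. -/
def mBoundary (μ : Measure X) (E : Set X) : Set X :=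
  {x | 0 < Filter.limsup (fun r => μ (Metric.ball x r ∩ E) / μ (Metric.ball x r))
        (𝓝[>] (0 : ℝ)) ∧
       0 < Filter.limsup (fun r => μ (Metric.ball x r \ E) / μ (Metric.ball x r))
        (𝓝[>] (0 : ℝ))}


set_option linter.unusedSectionVars false


lemma comp_lip {u : X → ℝ} {C : ℝ≥0} (hu : LipschitzWith C u) (γ : Curve X) :
    LipschitzOnWith C (u ∘ γ.toFun) (Icc 0 γ.len) := by
  have := hu.comp_lipschitzOnWith γ.lip
  simpa using this

lemma ftc_le {f : ℝ → ℝ} {C : ℝ≥0} {b : ℝ} (hb : 0 ≤ b) (hf : LipschitzOnWith C f (Icc 0 b)) :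
    ENNReal.ofReal |f 0 - f b| ≤ ∫⁻ t in Icc 0 b, ‖deriv f t‖ₑ := by
  have hac : AbsolutelyContinuousOnInterval f 0 b := by
    apply LipschitzOnWith.absolutelyContinuousOnInterval (K := C)
    rwa [uIcc_of_le hb]
  have h := hac.integral_deriv_eq_sub
  have h2 : ENNReal.ofReal |f 0 - f b| = ‖∫ (x : ℝ) in (0:ℝ)..b, deriv f x‖ₑ := by
    rw [h, abs_sub_comm, ← Real.enorm_eq_ofReal_abs]
  rw [h2, intervalIntegral.integral_of_le hb]
  refine (enorm_integral_le_lintegral_enorm _).trans ?_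
  exact lintegral_mono_set Ioc_subset_Icc_self

lemma ug_of_ae {u : X → ℝ} {C : ℝ≥0} (hu : LipschitzWith C u) {g : X → ℝ≥0∞} (γ : Curve X)
    (h : ∀ᵐ t ∂(volume.restrict (Icc 0 γ.len)), ‖deriv (u ∘ γ.toFun) t‖ₑ ≤ g (γ.toFun t)) :
    UGIneq u g γ :=
  (ftc_le γ.len_nonneg (comp_lip hu γ)).trans (lintegral_mono_ae h)

lemma ae_Ioo_of {b : ℝ} {p : ℝ → Prop} (h : ∀ᵐ t, t ∈ Ioo 0 b → p t) :
    ∀ᵐ t ∂(volume.restrict (Icc 0 b)), p t := by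
  rw [← restrict_Ioo_eq_restrict_Icc, ae_restrict_iff' measurableSet_Ioo]
  exact h

/-- upper gradient from pointwise slope -/
lemma ug_of_slope {u : X → ℝ} {C : ℝ≥0} (hu : LipschitzWith C u) {g : X → ℝ≥0∞}
    (h : ∀ x, IsLocalExtr u x ∨
      ∀ᶠ y in 𝓝 x, ENNReal.ofReal |u y - u x| ≤ g x * ENNReal.ofReal (dist y x))
    (γ : Curve X) : UGIneq u g γ := by
  apply ug_of_ae hu γ
  apply ae_Ioo_of
  refine Eventually.of_forall fun t ht => ?_
  have hcont : ContinuousAt γ.toFun t :=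
    γ.lip.continuousOn.continuousAt (Icc_mem_nhds ht.1 ht.2)
  by_cases hd : DifferentiableAt ℝ (u ∘ γ.toFun) t
  swap
  · rw [deriv_zero_of_not_differentiableAt hd]; simp
  rcases h (γ.toFun t) with h | h
  · have : IsLocalExtr (u ∘ γ.toFun) t := h.comp_tendsto hcont
    rw [this.deriv_eq_zero]; simp
  · by_cases hg : g (γ.toFun t) = ∞
    · rw [hg]; exact le_top
    have hs := hd.hasDerivAt.tendsto_slope
    have hs' := hs.enorm
    refine le_of_tendsto hs' ?_
    have h1 : ∀ᶠ s in 𝓝[≠] t, s ∈ Icc 0 γ.len :=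
      nhdsWithin_le_nhds (Icc_mem_nhds ht.1 ht.2)
    have h2 := (hcont.eventually h).filter_mono (nhdsWithin_le_nhds (s := {t}ᶜ))
    filter_upwards [h1, h2, self_mem_nhdsWithin] with s hs1 hs2 hs3
    have hne : s - t ≠ 0 := sub_ne_zero.2 hs3
    have hpos : 0 < |s - t| := abs_pos.2 hne
    have hl : dist (γ.toFun s) (γ.toFun t) ≤ |s - t| := by
      have := γ.lip.dist_le_mul s hs1 t ⟨ht.1.le, ht.2.le⟩
      simpa [Real.dist_eq] using this
    rw [slope_def_field, Real.enorm_eq_ofReal_abs, abs_div,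
      ENNReal.ofReal_div_of_pos hpos]
    apply ENNReal.div_le_of_le_mul
    refine hs2.trans ?_
    gcongr

lemma zeroMod_mono {μ : Measure X} {Γ Γ' : Set (Curve X)} (h : ZeroMod μ Γ') (hs : Γ ⊆ Γ') :
    ZeroMod μ Γ := by
  obtain ⟨ρ, a, b, c⟩ := h
  exact ⟨ρ, a, b, fun γ hγ => c γ (hs hγ)⟩

lemma exists_pos_mul_le {a : ℝ≥0∞} (ha : a < ∞) {ε : ℝ≥0∞} (hε : ε ≠ 0) :
    ∃ c : ℝ≥0, 0 < c ∧ c * a ≤ ε := by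
  obtain ⟨n, hn, h⟩ := ENNReal.exists_nnreal_pos_mul_lt ha.ne hε
  exact ⟨n, hn, h.le⟩

lemma aemeas_curve (γ : Curve X) : AEMeasurable γ.toFun (volume.restrict (Icc 0 γ.len)) :=
  γ.lip.continuousOn.aemeasurable measurableSet_Icc

lemma integral_tsum_curve (γ : Curve X) {ρ : ℕ → X → ℝ≥0∞} (h : ∀ n, Measurable (ρ n)) :
    γ.integral (fun x => ∑' n, ρ n x) = ∑' n, γ.integral (ρ n) := by
  unfold Curve.integral
  exact lintegral_tsum fun n => (h n).comp_aemeasurable (aemeas_curve γ)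

lemma integral_mul_curve (γ : Curve X) {ρ : X → ℝ≥0∞} (h : Measurable ρ) (c : ℝ≥0∞) :
    γ.integral (fun x => c * ρ x) = c * γ.integral ρ := by
  unfold Curve.integral
  exact lintegral_const_mul'' c (h.comp_aemeasurable (aemeas_curve γ))

lemma zeroMod_iUnion {μ : Measure X} {Γ : ℕ → Set (Curve X)} (h : ∀ n, ZeroMod μ (Γ n)) :
    ZeroMod μ (⋃ n, Γ n) := by
  choose ρ hm hi hΓ using h
  obtain ⟨δ, δpos, hδ⟩ := ENNReal.exists_pos_sum_of_countable' one_ne_zero ℕ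
  have := fun n => exists_pos_mul_le (hi n) (δpos n).ne'
  choose c cpos hc using this
  refine ⟨fun x => ∑' n, c n * ρ n x, ?_, ?_, ?_⟩
  · exact Measurable.tsum fun n => (hm n).const_mul _
  · rw [lintegral_tsum fun n => ((hm n).const_mul _).aemeasurable]
    calc _ ≤ ∑' n, δ n := by
          refine ENNReal.tsum_le_tsum fun n => ?_
          rw [lintegral_const_mul _ (hm n)]; exact hc n
      _ < 1 := hδ
      _ < ∞ := ENNReal.one_lt_top
  · intro γ hγ
    obtain ⟨n, hn⟩ := mem_iUnion.1 hγ
    rw [integral_tsum_curve γ (fun n => (hm n).const_mul _)]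
    refine top_unique ?_
    refine le_trans ?_ (ENNReal.le_tsum n)
    rw [integral_mul_curve γ (hm n), hΓ n γ hn]
    rw [ENNReal.mul_top]
    simpa using (cpos n).ne'

lemma zeroMod_union {μ : Measure X} {Γ Γ' : Set (Curve X)} (h : ZeroMod μ Γ) (h' : ZeroMod μ Γ') :
    ZeroMod μ (Γ ∪ Γ') := by
  have := zeroMod_iUnion (μ := μ) (Γ := fun n => if n = 0 then Γ else Γ')
    (fun n => by by_cases hn : n = 0 <;> simp [hn, h, h'])
  refine zeroMod_mono this ?_
  rintro γ (hγ | hγ)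
  · exact mem_iUnion.2 ⟨0, by simpa using hγ⟩
  · exact mem_iUnion.2 ⟨1, by simpa using hγ⟩

/-- null sets are not seen by a.e. curve -/
lemma zeroMod_null {μ : Measure X} {N : Set X} (hN : μ N = 0) :
    ZeroMod μ {γ : Curve X | ¬ ∀ᵐ t ∂(volume.restrict (Icc 0 γ.len)), γ.toFun t ∉ N} := by
  refine ⟨(toMeasurable μ N).indicator fun _ => ∞, ?_, ?_, ?_⟩
  · exact measurable_const.indicator (measurableSet_toMeasurable _ _)
  · rw [lintegral_indicator (measurableSet_toMeasurable _ _)]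
    simp [measure_toMeasurable, hN]
  · intro γ hγ
    by_contra hne
    apply hγ
    have hm : AEMeasurable (fun t => (toMeasurable μ N).indicator (fun _ => (∞ : ℝ≥0∞)) (γ.toFun t))
        (volume.restrict (Icc 0 γ.len)) :=
      (measurable_const.indicator (measurableSet_toMeasurable _ _)).comp_aemeasurable
        (aemeas_curve γ)
    filter_upwards [ae_lt_top' hm hne] with t ht hmem
    rw [indicator_of_mem (subset_toMeasurable _ _ hmem)] at ht
    exact lt_irrefl _ ht

/-- sub-curve -/
def Curve.sub (γ : Curve X) (a b : ℝ) (ha : 0 ≤ a) (hab : a ≤ b) (hb : b ≤ γ.len) : Curve X where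
  len := b - a
  len_nonneg := sub_nonneg.2 hab
  toFun := fun t => γ.toFun (t + a)
  lip := by
    intro s hs t ht
    have := γ.lip (x := s + a) ⟨by linarith [hs.1], by linarith [hs.2]⟩
      (y := t + a) ⟨by linarith [ht.1], by linarith [ht.2]⟩
    simpa using this

lemma sub_integral (γ : Curve X) (a b : ℝ) (ha : 0 ≤ a) (hab : a ≤ b) (hb : b ≤ γ.len)
    (g : X → ℝ≥0∞) :
    (γ.sub a b ha hab hb).integral g = ∫⁻ t in Icc a b, g (γ.toFun t) := by
  unfold Curve.integral Curve.sub
  dsimp only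
  have hmp : MeasurePreserving (fun t : ℝ => t + a) volume volume :=
    measurePreserving_add_right volume a
  have he : MeasurableEmbedding (fun t : ℝ => t + a) := measurableEmbedding_addRight a
  have := hmp.setLIntegral_comp_preimage_emb he (fun t => g (γ.toFun t)) (Icc a b)
  rw [← this]
  congr 2
  simp

lemma sub_integral_le (γ : Curve X) (a b : ℝ) (ha : 0 ≤ a) (hab : a ≤ b) (hb : b ≤ γ.len)
    (g : X → ℝ≥0∞) :
    (γ.sub a b ha hab hb).integral g ≤ γ.integral g := by
  rw [sub_integral]
  exact lintegral_mono_set (Icc_subset_Icc ha hb)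



lemma lint_ball_lt_top [ProperSpace X] {μ : Measure X} {g : X → ℝ≥0∞}
    (h : LIntegrableLocOn μ g univ) (x : X) (r : ℝ) : ∫⁻ y in closedBall x r, g y ∂μ < ∞ := by
  refine (isCompact_closedBall x r).induction_on (p := fun s => ∫⁻ y in s, g y ∂μ < ∞) ?_ ?_ ?_ ?_
  · simp
  · intro s t hst ht
    exact (lintegral_mono_set hst).trans_lt ht
  · intro s t hs ht
    exact (lintegral_union_le _ _ _).trans_lt (ENNReal.add_lt_top.2 ⟨hs, ht⟩)
  · intro y _
    obtain ⟨ρ, hρ, hy⟩ := h y (mem_univ _)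
    refine ⟨ball y ρ, nhdsWithin_le_nhds (ball_mem_nhds y hρ), ?_⟩
    simpa using hy

lemma zeroMod_top [ProperSpace X] {μ : Measure X} {g : X → ℝ≥0∞} (hg : Measurable g)
    (h : LIntegrableLocOn μ g univ) : ZeroMod μ {γ : Curve X | γ.integral g = ∞} := by
  rcases isEmpty_or_nonempty X with hX | ⟨⟨x0⟩⟩
  · exact ⟨0, measurable_zero, by simp, fun γ _ => (hX.false (γ.toFun 0)).elim⟩
  have : ∀ n : ℕ, ZeroMod μ {γ : Curve X | γ.integral ((closedBall x0 n).indicator g) = ∞} := by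
    intro n
    refine ⟨_, hg.indicator measurableSet_closedBall, ?_, fun γ hγ => hγ⟩
    rw [lintegral_indicator measurableSet_closedBall]
    exact lint_ball_lt_top h _ _
  refine zeroMod_mono (zeroMod_iUnion this) ?_
  intro γ hγ
  have hb : Bornology.IsBounded (γ.toFun '' Icc 0 γ.len) :=
    (isCompact_Icc.image_of_continuousOn γ.lip.continuousOn).isBounded
  obtain ⟨r, hr⟩ := (isBounded_iff_subset_closedBall x0).1 hb
  obtain ⟨n, hn⟩ := exists_nat_ge r
  refine mem_iUnion.2 ⟨n, ?_⟩
  rw [mem_ofPred_eq] at hγ ⊢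
  rw [← hγ]
  unfold Curve.integral
  refine setLIntegral_congr_fun measurableSet_Icc fun t ht => ?_
  rw [indicator_of_mem]
  exact closedBall_subset_closedBall hn (hr (mem_image_of_mem _ ht))

lemma deriv_le_of {f G : ℝ → ℝ} {b : ℝ} (hb : 0 ≤ b) (hG : IntegrableOn G (Icc 0 b))
    (h : ∀ s t, 0 ≤ s → s ≤ t → t ≤ b → |f s - f t| ≤ ∫ x in s..t, G x) :
    ∀ᵐ t, t ∈ Ioo 0 b → |deriv f t| ≤ G t := by
  have hi : IntervalIntegrable G volume 0 b := by
    rw [intervalIntegrable_iff_integrableOn_Icc_of_le hb]; exact hG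
  filter_upwards [hi.ae_hasDerivAt_integral] with t ht htm
  rw [uIcc_of_le hb] at ht
  have htI : t ∈ Icc 0 b := ⟨htm.1.le, htm.2.le⟩
  have hd := ht htI 0 ⟨le_rfl, hb⟩
  have h0 : 0 ≤ G t ∧ True := by
    refine ⟨?_, trivial⟩
    have hs := hd.tendsto_slope
    have hs2 := hs.mono_left (nhdsWithin_mono t (fun x (hx : t < x) => ne_of_gt hx) : 𝓝[>] t ≤ 𝓝[≠] t)
    refine ge_of_tendsto hs2 ?_
    have : ∀ᶠ s in 𝓝[>] t, s < b := nhdsWithin_le_nhds (Iio_mem_nhds htm.2)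
    filter_upwards [this, self_mem_nhdsWithin] with s hs1 hs2
    have hs2 : t < s := hs2
    rw [slope_def_field]
    apply div_nonneg _ (by linarith)
    rw [intervalIntegral.integral_interval_sub_left]
    · exact (abs_nonneg _).trans (h t s htm.1.le hs2.le hs1.le)
    · exact hi.mono_set (by rw [uIcc_of_le hb, uIcc_of_le (by linarith [htm.1])]; exact Icc_subset_Icc le_rfl hs1.le)
    · exact hi.mono_set (by rw [uIcc_of_le hb, uIcc_of_le (by linarith [htm.1])]; exact Icc_subset_Icc le_rfl htm.2.le)
  by_cases hdf : DifferentiableAt ℝ f t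
  swap
  · rw [deriv_zero_of_not_differentiableAt hdf]; simpa using h0.1
  have l : 𝓝[>] t ≤ 𝓝[≠] t := nhdsWithin_mono t (fun x (hx : t < x) => ne_of_gt hx)
  have hs := (hd.tendsto_slope).mono_left l
  have hf := ((hdf.hasDerivAt.tendsto_slope).mono_left l).abs
  refine le_of_tendsto_of_tendsto hf hs ?_
  have : ∀ᶠ s in 𝓝[>] t, s < b := nhdsWithin_le_nhds (Iio_mem_nhds htm.2)
  filter_upwards [this, self_mem_nhdsWithin] with s hs1 hs2
  have hs2 : t < s := hs2
  rw [slope_def_field, slope_def_field, abs_div, abs_of_pos (sub_pos.2 hs2)]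
  apply div_le_div_of_nonneg_right _ (by linarith)
  rw [intervalIntegral.integral_interval_sub_left]
  · rw [abs_sub_comm]; exact (h t s htm.1.le hs2.le hs1.le)
  · exact hi.mono_set (by rw [uIcc_of_le hb, uIcc_of_le (by linarith [htm.1])]; exact Icc_subset_Icc le_rfl hs1.le)
  · exact hi.mono_set (by rw [uIcc_of_le hb, uIcc_of_le (by linarith [htm.1])]; exact Icc_subset_Icc le_rfl htm.2.le)

lemma zeroMod_deriv [ProperSpace X] {μ : Measure X} {u : X → ℝ} {g : X → ℝ≥0∞}
    (hg : IsWeakUpperGradientOn μ u g univ) (hl : LIntegrableLocOn μ g univ) :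
    ZeroMod μ {γ : Curve X | ¬ ∀ᵐ t ∂(volume.restrict (Icc 0 γ.len)),
      ‖deriv (u ∘ γ.toFun) t‖ₑ ≤ g (γ.toFun t)} := by
  obtain ⟨hgm, ρ, ρm, ρi, hρ⟩ := hg
  set g' := hgm.mk g with hg'
  have hm' : Measurable g' := hgm.measurable_mk
  have hl' : LIntegrableLocOn μ g' univ := by
    intro x hx
    obtain ⟨r, hr, h⟩ := hl x hx
    refine ⟨r, hr, ?_⟩
    rwa [← lintegral_congr_ae (ae_restrict_of_ae hgm.ae_eq_mk)]
  have h1 := zeroMod_null (μ := μ) (N := {x | g x ≠ g' x}) hgm.ae_eq_mk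
  have h2 := zeroMod_top hm' hl'
  have h3 : ZeroMod μ {γ : Curve X | γ.integral ρ = ∞} := ⟨ρ, ρm, ρi, fun γ h => h⟩
  refine zeroMod_mono (zeroMod_union h1 (zeroMod_union h2 h3)) ?_
  intro γ hγ
  by_contra hcon
  simp only [mem_union, mem_ofPred_eq, not_or, not_not] at hcon
  obtain ⟨c1, c2, c3⟩ := hcon
  apply hγ
  have c1' : ∀ᵐ t ∂(volume.restrict (Icc 0 γ.len)), g (γ.toFun t) = g' (γ.toFun t) := by
    filter_upwards [c1] with t ht using ht
  have hmeas : AEMeasurable (fun t => g' (γ.toFun t)) (volume.restrict (Icc 0 γ.len)) :=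
    hm'.comp_aemeasurable (aemeas_curve γ)
  have hfin := ae_lt_top' hmeas c2
  have hint : IntegrableOn (fun t => (g' (γ.toFun t)).toReal) (Icc 0 γ.len) :=
    integrable_toReal_of_lintegral_ne_top hmeas c2
  have key := deriv_le_of (f := u ∘ γ.toFun) γ.len_nonneg hint ?_
  · have key' := ae_Ioo_of key
    filter_upwards [key', c1', hfin] with t ht1 ht2 ht3
    rw [ht2, Real.enorm_eq_ofReal_abs]
    exact ENNReal.ofReal_le_of_le_toReal ht1
  · intro s t hs hst ht
    have hsub : UGIneq u g (γ.sub s t hs hst ht) := by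
      by_contra hno
      have := hρ (γ.sub s t hs hst ht) ⟨fun _ _ => mem_univ _, hno⟩
      exact c3 (top_unique (this ▸ sub_integral_le γ s t hs hst ht ρ))
    unfold UGIneq at hsub
    rw [sub_integral] at hsub
    have hmono : volume.restrict (Icc s t) ≤ volume.restrict (Icc 0 γ.len) :=
      Measure.restrict_mono (Icc_subset_Icc hs ht) le_rfl
    rw [lintegral_congr_ae (ae_mono hmono c1')] at hsub
    rw [intervalIntegral.integral_of_le hst, ← integral_Icc_eq_integral_Ioc,
      integral_toReal (hmeas.mono_measure hmono) (ae_mono hmono hfin)]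
    have hne : ∫⁻ x in Icc s t, g' (γ.toFun x) ≠ ∞ :=
      ne_top_of_le_ne_top c2 (lintegral_mono' hmono le_rfl)
    refine (ENNReal.ofReal_le_iff_le_toReal hne).1 ?_
    refine le_trans (le_of_eq ?_) hsub
    simp [Curve.sub]

lemma wug_iInf [ProperSpace X] {μ : Measure X} {u : X → ℝ} {C : ℝ≥0} (hu : LipschitzWith C u)
    {g : ℕ → X → ℝ≥0∞}
    (hg : ∀ n, IsWeakUpperGradientOn μ u (g n) univ) (hl : ∀ n, LIntegrableLocOn μ (g n) univ) :
    IsWeakUpperGradientOn μ u (fun x => ⨅ n, g n x) univ := by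
  refine ⟨AEMeasurable.iInf fun n => (hg n).1, ?_⟩
  refine zeroMod_mono (zeroMod_iUnion fun n => zeroMod_deriv (hg n) (hl n)) ?_
  rintro γ ⟨-, hγ⟩
  by_contra hcon
  simp only [mem_iUnion, mem_ofPred_eq, not_exists, not_not] at hcon
  apply hγ
  apply ug_of_ae hu
  filter_upwards [ae_all_iff.2 hcon] with t ht
  exact le_iInf ht

lemma loc_of_int {μ : Measure X} {g : X → ℝ≥0∞} (h : ∫⁻ x, g x ∂μ < ∞) :
    LIntegrableLocOn μ g univ := fun _ _ =>
  ⟨1, one_pos, (setLIntegral_le_lintegral _ _).trans_lt h⟩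

lemma exists_minimal [ProperSpace X] {μ : Measure X} {u : X → ℝ} {C : ℝ≥0}
    (hu : LipschitzWith C u) {g0 : X → ℝ≥0∞} (hg0 : IsWeakUpperGradientOn μ u g0 univ)
    (hi0 : ∫⁻ x, g0 x ∂μ < ∞) :
    ∃ g, IsMinimalWUG μ u g univ ∧ ∫⁻ x, g x ∂μ ≤ ∫⁻ x, g0 x ∂μ := by
  set S : Set ℝ≥0∞ := {a | ∃ g, IsWeakUpperGradientOn μ u g univ ∧ ∫⁻ x, g x ∂μ < ∞ ∧
    ∫⁻ x, g x ∂μ = a} with hS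
  have hne : S.Nonempty := ⟨_, g0, hg0, hi0, rfl⟩
  obtain ⟨a, -, ha, haS⟩ := exists_seq_tendsto_sInf hne (OrderBot.bddBelow S)
  choose g hg hgi hga using haS
  have hw := wug_iInf hu hg fun n => loc_of_int (hgi n)
  set h : X → ℝ≥0∞ := fun x => ⨅ n, g n x with hh
  have hle : ∫⁻ x, h x ∂μ ≤ sInf S := by
    refine ge_of_tendsto ha (Eventually.of_forall fun n => ?_)
    rw [← hga n]
    exact lintegral_mono fun x => iInf_le _ n
  have hlt : ∫⁻ x, h x ∂μ < ∞ := by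
    refine (hle.trans (sInf_le (a := ∫⁻ x, g0 x ∂μ) ⟨g0, hg0, hi0, rfl⟩)).trans_lt hi0
  refine ⟨h, ⟨hw, ?_⟩, hle.trans (sInf_le ⟨g0, hg0, hi0, rfl⟩)⟩
  intro g' hg' hl'
  have hw2 := wug_iInf (μ := μ) hu (g := fun n => if n = 0 then h else g')
    (fun n => by by_cases hn : n = 0 <;> simp [hn, hw, hg'])
    (fun n => by by_cases hn : n = 0 <;> simp [hn, hl', loc_of_int hlt])
  set k : X → ℝ≥0∞ := fun x => ⨅ n : ℕ, (if n = 0 then h else g') x with hk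
  have hkh : ∀ x, k x ≤ h x := fun x => (iInf_le _ 0).trans (by simp)
  have hkg : ∀ x, k x ≤ g' x := fun x => (iInf_le _ 1).trans (by simp)
  have hklt : ∫⁻ x, k x ∂μ < ∞ := (lintegral_mono hkh).trans_lt hlt
  have hge : ∫⁻ x, h x ∂μ ≤ ∫⁻ x, k x ∂μ := hle.trans (sInf_le ⟨k, hw2, hklt, rfl⟩)
  have hae : k =ᵐ[μ] h :=
    ae_eq_of_ae_le_of_lintegral_le (Eventually.of_forall hkh) hklt.ne hw.1 hge
  rw [Measure.restrict_univ]
  filter_upwards [hae] with x hx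
  rw [← hx]; exact hkg x



/-- the scale -/
def sc (n : ℕ) : ℝ := 1 / ((n : ℝ) + 1)

lemma sc_pos (n : ℕ) : 0 < sc n := by unfold sc; positivity

lemma sc_le_one (n : ℕ) : sc n ≤ 1 := by
  unfold sc; rw [div_le_one (by positivity)]; linarith [Nat.cast_nonneg (α := ℝ) n]

lemma sc_anti {m n : ℕ} (h : m ≤ n) : sc n ≤ sc m := by
  unfold sc
  have : (m : ℝ) ≤ n := by exact_mod_cast h
  gcongr

lemma sc_tendsto : Tendsto sc atTop (𝓝 0) := tendsto_one_div_add_atTop_nhds_zero_nat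

/-- truncated local infimum -/
def gk (g : X → ℝ≥0∞) (n : ℕ) (x : X) : ℝ≥0∞ := min (n : ℝ≥0∞) (⨅ y ∈ ball x (sc n), g y)

lemma gk_le_nat (g : X → ℝ≥0∞) (n : ℕ) (x : X) : gk g n x ≤ n := min_le_left _ _

lemma gk_le (g : X → ℝ≥0∞) {n : ℕ} {x y : X} (h : dist y x < sc n) : gk g n x ≤ g y :=
  (min_le_right _ _).trans (iInf₂_le y h)

lemma gk_measurable (g : X → ℝ≥0∞) (n : ℕ) : Measurable (gk g n) := by
  unfold gk
  refine measurable_const.min ?_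
  refine measurable_of_Iio fun c => ?_
  have : IsOpen ((fun x => ⨅ y ∈ ball x (sc n), g y) ⁻¹' Iio c) := by
    have : ((fun x => ⨅ y ∈ ball x (sc n), g y) ⁻¹' Iio c) =
        ⋃ (y : X) (_ : g y < c), ball y (sc n) := by
      ext x
      simp only [mem_preimage, mem_Iio, iInf_lt_iff, mem_iUnion, mem_ball, exists_prop]
      constructor
      · rintro ⟨y, h1, h2⟩; exact ⟨y, h2, by rwa [dist_comm]⟩
      · rintro ⟨y, h1, h2⟩; exact ⟨y, by rwa [dist_comm], h1⟩
    rw [this]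
    exact isOpen_iUnion fun y => isOpen_iUnion fun _ => isOpen_ball
  exact this.measurableSet

/-- comparison of truncated infima at nearby points -/
lemma gk_le_gk (g : X → ℝ≥0∞) {m n : ℕ} (hmn : m ≤ n) {x y : X} (h : dist x y + sc n ≤ sc m) :
    gk g m x ≤ gk g n y := by
  unfold gk
  refine min_le_min (by exact_mod_cast hmn) ?_
  refine le_iInf₂ fun z hz => iInf₂_le z ?_
  rw [mem_ball] at hz ⊢
  have := dist_triangle z y x
  rw [dist_comm y x] at this
  linarith

lemma gk_mono (g : X → ℝ≥0∞) {m n : ℕ} (hmn : m ≤ n) (x : X) : gk g m x ≤ gk g n x := by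
  unfold gk
  refine min_le_min (by exact_mod_cast hmn) ?_
  exact le_iInf₂ fun z hz => iInf₂_le z (ball_subset_ball (sc_anti hmn) hz)

lemma le_iSup_gk {g : X → ℝ≥0∞} (hg : LowerSemicontinuous g) (x : X) :
    g x ≤ ⨆ n, gk g n x := by
  refine le_of_forall_lt fun c hc => ?_
  obtain ⟨c', hc1, hc2⟩ := exists_between hc
  refine lt_of_lt_of_le hc1 ?_
  have h := hg x c' hc2
  obtain ⟨ε, hε, hb⟩ := Metric.eventually_nhds_iff_ball.1 h
  obtain ⟨n1, hn1⟩ := ENNReal.exists_nat_gt (ne_top_of_lt hc2)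
  have h2 : ∀ᶠ n in atTop, sc n < ε := sc_tendsto.eventually (Iio_mem_nhds hε)
  obtain ⟨n, hn, hn'⟩ := (h2.and (eventually_ge_atTop n1)).exists
  refine le_trans ?_ (le_iSup _ n)
  unfold gk
  refine le_min ?_ ?_
  · exact hn1.le.trans (by exact_mod_cast hn')
  · exact le_iInf₂ fun y hy => (hb y (ball_subset_ball hn.le hy)).le

/-- `x` is reachable from `K` by a coarse curve of cost at most `a`. -/
def Reach (K : Set X) (g : X → ℝ≥0∞) (n : ℕ) (x : X) (a : ℝ≥0∞) : Prop :=
  ∃ L : ℝ, 0 ≤ L ∧ ∃ f : ℝ → X, Measurable f ∧ f 0 ∈ K ∧ f L = x ∧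
    (∀ s ∈ Icc 0 L, ∀ t ∈ Icc 0 L, dist (f s) (f t) ≤ |s - t| + sc n) ∧
    ∫⁻ t in Ico 0 L, (1 + gk g n (f t)) ≤ a

lemma Reach.mono {K : Set X} {g : X → ℝ≥0∞} {m n : ℕ} (hmn : m ≤ n) {x : X} {a : ℝ≥0∞}
    (h : Reach K g n x a) : Reach K g m x a := by
  obtain ⟨L, hL, f, hf, h0, h1, h2, h3⟩ := h
  refine ⟨L, hL, f, hf, h0, h1, fun s hs t ht => (h2 s hs t ht).trans ?_, le_trans ?_ h3⟩
  · linarith [sc_anti hmn]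
  · exact lintegral_mono fun t => by dsimp only; gcongr; exact gk_mono g hmn _

lemma reach_self {K : Set X} {g : X → ℝ≥0∞} {n : ℕ} {x : X} (hx : x ∈ K) : Reach K g n x 0 := by
  refine ⟨0, le_rfl, fun _ => x, measurable_const, hx, rfl, fun s _ t _ => ?_, by simp⟩
  rw [dist_self]; exact add_nonneg (abs_nonneg _) (sc_pos n).le

lemma Reach.jump {K : Set X} {g : X → ℝ≥0∞} {n : ℕ} {x y : X} {a : ℝ≥0∞}
    (h : Reach K g n x a) (hxy : dist x y ≤ sc n) :
    Reach K g n y (a + (1 + gk g n x) * ENNReal.ofReal (dist x y)) := by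
  rcases eq_or_ne x y with rfl | hne
  · simpa using h
  obtain ⟨L, hL, f, hf, h0, h1, h2, h3⟩ := h
  set d := dist x y with hd
  have hdpos : 0 < d := dist_pos.2 hne
  set f' : ℝ → X := fun t => if t < L then f t else if t < L + d then x else y with hf'
  have e1 : ∀ t, t ≤ L → f' t = f t := by
    intro t ht
    rcases lt_or_eq_of_le ht with h | h
    · simp [hf', h]
    · subst h; simp [hf', hdpos, h1]
  have e2 : ∀ t, L ≤ t → t < L + d → f' t = x := by
    intro t ht ht'
    simp [hf', not_lt.2 ht, ht']
  have e3 : f' (L + d) = y := by simp [hf', hdpos.le]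
  refine ⟨L + d, by linarith, f', ?_, ?_, e3, ?_, ?_⟩
  · exact Measurable.ite measurableSet_Iio hf
      (Measurable.ite measurableSet_Iio measurable_const measurable_const)
  · rw [e1 0 hL]; exact h0
  · -- wlog s ≤ t
    have key : ∀ s ∈ Icc 0 (L + d), ∀ t ∈ Icc 0 (L + d), s ≤ t →
        dist (f' s) (f' t) ≤ (t - s) + sc n := by
      intro s hs t ht hst
      have hsL : s ≤ L → dist (f s) x ≤ (L - s) + sc n := by
        intro hsl
        have := h2 s ⟨hs.1, hsl⟩ L ⟨hL, le_rfl⟩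
        rwa [h1, abs_sub_comm, abs_of_nonneg (by linarith)] at this
      rcases le_or_gt t L with htl | htl
      · rw [e1 s (hst.trans htl), e1 t htl]
        have := h2 s ⟨hs.1, hst.trans htl⟩ t ⟨ht.1, htl⟩
        rwa [abs_sub_comm, abs_of_nonneg (by linarith)] at this
      rcases lt_or_eq_of_le ht.2 with ht2 | ht2
      · rw [e2 t htl.le ht2]
        rcases le_or_gt s L with hsl | hsl
        · rw [e1 s hsl]; linarith [hsL hsl]
        · rw [e2 s hsl.le (lt_of_le_of_lt hst ht2), dist_self]
          linarith [sc_pos n]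
      · subst ht2
        rw [e3]
        rcases le_or_gt s L with hsl | hsl
        · rw [e1 s hsl]
          linarith [hsL hsl, dist_triangle (f s) x y]
        · rcases lt_or_eq_of_le hs.2 with hs2 | hs2
          · rw [e2 s hsl.le hs2]; linarith
          · rw [hs2, e3, dist_self]; linarith [sc_pos n]
    intro s hs t ht
    rcases le_total s t with hst | hst
    · rw [abs_sub_comm, abs_of_nonneg (by linarith)]; exact key s hs t ht hst
    · rw [abs_of_nonneg (by linarith), dist_comm]; exact key t ht s hs hst
  · have hun : Ico 0 (L + d) = Ico 0 L ∪ Ico L (L + d) :=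
      (Ico_union_Ico_eq_Ico hL (by linarith)).symm
    rw [hun]
    refine (lintegral_union_le _ _ _).trans ?_
    refine add_le_add ?_ ?_
    · refine le_trans (le_of_eq ?_) h3
      exact setLIntegral_congr_fun measurableSet_Ico fun t ht => by
        simp only [e1 t ht.2.le]
    · have : ∫⁻ t in Ico L (L + d), (1 + gk g n (f' t)) = ∫⁻ t in Ico L (L + d), (1 + gk g n x) :=
        setLIntegral_congr_fun measurableSet_Ico fun t ht => by
          simp only [e2 t ht.1 ht.2]
      rw [this, setLIntegral_const, Real.volume_Ico]
      simp

/-- capped coarse distance from `K` -/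
def cd (K : Set X) (g : X → ℝ≥0∞) (n : ℕ) (x : X) : ℝ≥0∞ := min 1 (sInf {a | Reach K g n x a})

lemma cd_le_one (K : Set X) (g : X → ℝ≥0∞) (n : ℕ) (x : X) : cd K g n x ≤ 1 := min_le_left _ _

lemma cd_ne_top (K : Set X) (g : X → ℝ≥0∞) (n : ℕ) (x : X) : cd K g n x ≠ ∞ :=
  ne_top_of_le_ne_top ENNReal.one_ne_top (cd_le_one K g n x)

lemma cd_mono (K : Set X) (g : X → ℝ≥0∞) {m n : ℕ} (h : m ≤ n) (x : X) :
    cd K g m x ≤ cd K g n x :=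
  min_le_min le_rfl (sInf_le_sInf fun _ ha => Reach.mono h ha)

lemma cd_zero {K : Set X} {g : X → ℝ≥0∞} {n : ℕ} {x : X} (h : x ∈ K) : cd K g n x = 0 :=
  le_antisymm ((min_le_right _ _).trans (sInf_le (reach_self h))) zero_le

lemma cd_jump (K : Set X) (g : X → ℝ≥0∞) {n : ℕ} {x y : X} (h : dist x y ≤ sc n) :
    cd K g n y ≤ cd K g n x + (1 + gk g n x) * ENNReal.ofReal (dist x y) := by
  rcases le_total 1 (sInf {a | Reach K g n x a}) with h1 | h1
  · have : cd K g n x = 1 := min_eq_left h1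
    rw [this]
    exact (cd_le_one _ _ _ _).trans le_self_add
  · have : cd K g n x = sInf {a | Reach K g n x a} := min_eq_right h1
    rw [this, ENNReal.sInf_add]
    refine le_iInf₂ fun a ha => ?_
    exact (min_le_right _ _).trans (sInf_le (Reach.jump ha h))

/-- real-valued version -/
def vr (K : Set X) (g : X → ℝ≥0∞) (n : ℕ) (x : X) : ℝ := (cd K g n x).toReal

lemma vr_nonneg (K : Set X) (g : X → ℝ≥0∞) (n : ℕ) (x : X) : 0 ≤ vr K g n x :=
  ENNReal.toReal_nonneg

lemma vr_le_one (K : Set X) (g : X → ℝ≥0∞) (n : ℕ) (x : X) : vr K g n x ≤ 1 :=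
  ENNReal.toReal_le_of_le_ofReal zero_le_one (by simpa using cd_le_one K g n x)

lemma vr_mono (K : Set X) (g : X → ℝ≥0∞) {m n : ℕ} (h : m ≤ n) (x : X) :
    vr K g m x ≤ vr K g n x :=
  ENNReal.toReal_mono (cd_ne_top _ _ _ _) (cd_mono K g h x)

lemma vr_zero {K : Set X} {g : X → ℝ≥0∞} {n : ℕ} {x : X} (h : x ∈ K) : vr K g n x = 0 := by
  simp [vr, cd_zero h]

lemma gk_ne_top (g : X → ℝ≥0∞) (n : ℕ) (x : X) : gk g n x ≠ ∞ :=
  ne_top_of_le_ne_top (ENNReal.natCast_ne_top n) (gk_le_nat g n x)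

lemma vr_jump (K : Set X) (g : X → ℝ≥0∞) {n : ℕ} {x y : X} (h : dist x y ≤ sc n) :
    vr K g n y ≤ vr K g n x + (1 + (gk g n x).toReal) * dist x y := by
  have h1 := cd_jump K g h
  have hne : (1 + gk g n x) * ENNReal.ofReal (dist x y) ≠ ∞ :=
    ENNReal.mul_ne_top (ENNReal.add_ne_top.2 ⟨ENNReal.one_ne_top, gk_ne_top g n x⟩)
      ENNReal.ofReal_ne_top
  have := ENNReal.toReal_mono (ENNReal.add_ne_top.2 ⟨cd_ne_top K g n x, hne⟩) h1
  rw [ENNReal.toReal_add (cd_ne_top K g n x) hne, ENNReal.toReal_mul,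
    ENNReal.toReal_add ENNReal.one_ne_top (gk_ne_top g n x), ENNReal.toReal_ofReal dist_nonneg] at this
  simpa [vr] using this

lemma vr_lip (K : Set X) (g : X → ℝ≥0∞) (n : ℕ) :
    LipschitzWith ((n : ℝ≥0) + 1) (vr K g n) := by
  refine LipschitzWith.of_le_add_mul _ fun y x => ?_
  have hc : (((n : ℝ≥0) + 1 : ℝ≥0) : ℝ) = n + 1 := by push_cast; rfl
  rw [hc]
  rcases le_total (dist x y) (sc n) with h | h
  · refine (vr_jump K g h).trans ?_
    have : (gk g n x).toReal ≤ n := by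
      have := ENNReal.toReal_mono (ENNReal.natCast_ne_top n) (gk_le_nat g n x)
      simpa using this
    rw [dist_comm y x]
    have := dist_nonneg (x := x) (y := y)
    nlinarith
  · have h1 : 1 ≤ ((n : ℝ) + 1) * dist y x := by
      rw [dist_comm]
      unfold sc at h
      rwa [div_le_iff₀ (by positivity), mul_comm] at h
    linarith [vr_le_one K g n y, vr_nonneg K g n x]

/-- slope bound -/
lemma vr_slope (K : Set X) (g : X → ℝ≥0∞) (n : ℕ) (x : X) :
    ∀ᶠ y in 𝓝 x, ENNReal.ofReal |vr K g n y - vr K g n x| ≤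
      (1 + g x) * ENNReal.ofReal (dist y x) := by
  filter_upwards [ball_mem_nhds x (sc_pos n)] with y hy
  rw [mem_ball] at hy
  have hxy : dist x y ≤ sc n := by rw [dist_comm]; exact hy.le
  rcases eq_or_ne (g x) ∞ with hg | hg
  · rcases eq_or_ne y x with rfl | hne
    · simp
    · rw [hg, add_top, ENNReal.top_mul]
      · exact le_top
      · simpa using hne
  have h1 := vr_jump K g hxy
  have h2 := vr_jump K g hy.le
  have a1 : (gk g n x).toReal ≤ (g x).toReal :=
    ENNReal.toReal_mono hg (gk_le g (by simpa using sc_pos n))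
  have a2 : (gk g n y).toReal ≤ (g x).toReal :=
    ENNReal.toReal_mono hg (gk_le g (by rwa [dist_comm]))
  have : |vr K g n y - vr K g n x| ≤ (1 + (g x).toReal) * dist y x := by
    rw [dist_comm x y] at h1
    have := dist_nonneg (x := y) (y := x)
    rw [abs_le]
    constructor <;> nlinarith
  refine (ENNReal.ofReal_le_ofReal this).trans (le_of_eq ?_)
  rw [ENNReal.ofReal_mul (by positivity), ENNReal.ofReal_add zero_le_one ENNReal.toReal_nonneg,
    ENNReal.ofReal_toReal hg, ENNReal.ofReal_one]

lemma vr_ug (K : Set X) (g : X → ℝ≥0∞) (n : ℕ) (γ : Curve X) :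
    UGIneq (vr K g n) (Kᶜ.indicator fun x => 1 + g x) γ := by
  refine ug_of_slope (vr_lip K g n) (fun x => ?_) γ
  by_cases hx : x ∈ K
  · left; left
    refine Eventually.of_forall fun y => ?_
    rw [vr_zero hx]; exact vr_nonneg _ _ _ _
  · right
    rw [indicator_of_mem (by exact hx)]
    exact vr_slope K g n x

lemma ugineq_mono {u : X → ℝ} {g g' : X → ℝ≥0∞} {γ : Curve X} (h : UGIneq u g γ)
    (hg : ∀ x, g x ≤ g' x) : UGIneq u g' γ :=
  le_trans h (lintegral_mono fun _ => hg _)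



/-- limits of coarse curves are curves -/
lemma exists_curve [ProperSpace X] {K : Set X} (hK : IsClosed K) {g : X → ℝ≥0∞}
    (hg : LowerSemicontinuous g) {x : X} {a : ℝ≥0∞} (ha : a ≤ 1) (h : ∀ n, cd K g n x < a) :
    ∃ γ : Curve X, γ.toFun 0 ∈ K ∧ γ.toFun γ.len = x ∧ γ.integral (fun x => 1 + g x) ≤ a := by
  have h1 : ∀ n, Reach K g n x a := by
    intro n
    have := h n
    unfold cd at this
    rcases min_lt_iff.1 this with h | h
    · exact absurd (h.trans_le ha) (lt_irrefl _)
    · obtain ⟨b, hb, hba⟩ := sInf_lt_iff.1 h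
      obtain ⟨L, hL, f, hf, h0, h1, h2, h3⟩ := hb
      exact ⟨L, hL, f, hf, h0, h1, h2, h3.trans hba.le⟩
  choose L hL f hf h0 hx hd hc using h1
  have hL1 : ∀ n, L n ≤ 1 := by
    intro n
    have : ENNReal.ofReal (L n) ≤ 1 := by
      calc ENNReal.ofReal (L n) = ∫⁻ t in Ico 0 (L n), 1 := by simp
        _ ≤ ∫⁻ t in Ico 0 (L n), (1 + gk g n (f n t)) := lintegral_mono fun t => by simp
        _ ≤ 1 := (hc n).trans ha
    simpa using ENNReal.ofReal_le_one.1 this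
  set p : ℕ → ℝ → ℝ := fun n t => max 0 (min t (L n)) with hp
  have hpm : ∀ n t, p n t ∈ Icc 0 (L n) := fun n t =>
    ⟨le_max_left _ _, max_le (hL n) (min_le_right _ _)⟩
  have hpl : ∀ n s t, |p n s - p n t| ≤ |s - t| := by
    intro n s t
    refine (abs_max_sub_max_le_max _ _ _ _).trans ?_
    rw [sub_self, abs_zero, max_eq_right (abs_nonneg _)]
    refine (abs_min_sub_min_le_max _ _ _ _).trans ?_
    rw [sub_self, abs_zero, max_eq_left (abs_nonneg _)]
  have hpe : ∀ n t, t ∈ Icc 0 (L n) → p n t = t := by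
    intro n t ht
    simp [hp, ht.1, ht.2]
  set F : ℕ → ℝ → X := fun n t => f n (p n t) with hF
  have hFd : ∀ n s t, dist (F n s) (F n t) ≤ |s - t| + sc n := by
    intro n s t
    have := hd n _ (hpm n s) _ (hpm n t)
    linarith [hpl n s t]
  have hFx : ∀ n, F n (L n) = x := by
    intro n
    simp only [hF]
    rw [hpe n _ ⟨hL n, le_rfl⟩, hx]
  have hF0 : ∀ n, F n 0 = f n 0 := by
    intro n
    simp only [hF]
    rw [hpe n _ ⟨le_rfl, hL n⟩]
  have hFb : ∀ n t, F n t ∈ closedBall x 2 := by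
    intro n t
    rw [mem_closedBall]
    have h1 := hd n _ (hpm n t) _ ⟨hL n, le_rfl⟩
    rw [hx n] at h1
    have h2 : |p n t - L n| ≤ 1 := by
      rw [abs_le]; have := hpm n t; constructor <;> linarith [this.1, this.2, hL1 n, hL n]
    have := sc_le_one n
    simp only [hF]
    linarith
  set U : Ultrafilter ℕ := hyperfilter ℕ with hU
  have hUt : (U : Filter ℕ) ≤ atTop := Nat.hyperfilter_le_atTop
  have h2 : ∀ t, ∃ y, Tendsto (fun n => F n t) U (𝓝 y) := by
    intro t
    obtain ⟨y, _, hy⟩ := (isCompact_closedBall x 2).ultrafilter_le_nhds'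
      (U.map fun n => F n t) (by
        rw [Ultrafilter.mem_map]; exact Filter.Eventually.of_forall (fun n => hFb n t))
    exact ⟨y, hy⟩
  choose G hG using h2
  obtain ⟨l, hl01, hl⟩ : ∃ l ∈ Icc (0:ℝ) 1, Tendsto L U (𝓝 l) := by
    obtain ⟨y, h, hy⟩ := (isCompact_Icc (a := (0:ℝ)) (b := 1)).ultrafilter_le_nhds'
      (U.map L) (by
        rw [Ultrafilter.mem_map]; exact Filter.Eventually.of_forall (fun n => ⟨hL n, hL1 n⟩))
    exact ⟨y, h, hy⟩
  have hsc : Tendsto sc U (𝓝 0) := sc_tendsto.mono_left hUt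
  have hGl : ∀ s t, dist (G s) (G t) ≤ |s - t| := by
    intro s t
    have h1 : Tendsto (fun n => |s - t| + sc n) U (𝓝 (|s - t| + 0)) :=
      tendsto_const_nhds.add hsc
    rw [add_zero] at h1
    exact le_of_tendsto_of_tendsto' ((hG s).dist (hG t)) h1 fun n => hFd n s t
  have hG0 : G 0 ∈ K := hK.mem_of_tendsto (hG 0)
    (Filter.Eventually.of_forall fun n => by rw [hF0]; exact h0 n)
  have hGx : G l = x := by
    refine tendsto_nhds_unique (hG l) ?_
    rw [tendsto_iff_dist_tendsto_zero]
    have h1 : Tendsto (fun n => |l - L n| + sc n) U (𝓝 (|l - l| + 0)) :=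
      ((tendsto_const_nhds.sub hl).abs).add hsc
    rw [sub_self, abs_zero, add_zero] at h1
    refine squeeze_zero (fun n => dist_nonneg) (fun n => ?_) h1
    have := hFd n l (L n)
    rwa [hFx] at this
  have hGc : Continuous G := by
    refine (LipschitzWith.of_dist_le_mul (K := 1) fun s t => ?_).continuous
    simpa [Real.dist_eq] using hGl s t
  have hunif : ∀ δ > 0, ∀ᶠ n in U, ∀ t ∈ Icc (0:ℝ) 1, dist (F n t) (G t) < δ := by
    intro δ hδ
    obtain ⟨T, hT, hTf, hcov⟩ := finite_cover_balls_of_compact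
      (isCompact_Icc (a := (0:ℝ)) (b := 1)) (show 0 < δ / 4 by linarith)
    have e1 : ∀ᶠ n in U, ∀ t ∈ T, dist (F n t) (G t) < δ / 4 := by
      rw [Filter.eventually_all_finite hTf]
      intro t _
      exact (tendsto_iff_dist_tendsto_zero.1 (hG t)).eventually (Iio_mem_nhds (by linarith))
    have e2 : ∀ᶠ n in U, sc n < δ / 4 := hsc.eventually (Iio_mem_nhds (by linarith))
    filter_upwards [e1, e2] with n h1 h2 s hs
    have := hcov hs
    simp only [mem_iUnion, mem_ball, exists_prop] at this
    obtain ⟨t, ht, hst⟩ := this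
    rw [Real.dist_eq] at hst
    have a1 := hFd n s t
    have a2 := h1 t ht
    have a3 := hGl t s
    rw [abs_sub_comm] at a3
    linarith [dist_triangle4 (F n s) (F n t) (G t) (G s)]
  have key : ∀ k (δ : ℝ), 0 < δ → ∫⁻ t in Ico 0 (l - δ), (1 + gk g k (G t)) ≤ a := by
    intro k δ hδ
    have hk := sc_pos k
    have e1 := hunif (sc k / 2) (by linarith)
    have e2 : ∀ᶠ n in U, sc n < sc k / 2 := hsc.eventually (Iio_mem_nhds (by linarith))
    have e3 : ∀ᶠ n in U, l - δ < L n := hl.eventually (Ioi_mem_nhds (by linarith))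
    have e4 : ∀ᶠ n in U, k ≤ n := hUt (eventually_ge_atTop k)
    obtain ⟨n, ⟨⟨h1, h2⟩, h3⟩, h4⟩ := (((e1.and e2).and e3).and e4).exists
    calc ∫⁻ t in Ico 0 (l - δ), (1 + gk g k (G t))
        ≤ ∫⁻ t in Ico 0 (l - δ), (1 + gk g n (f n t)) := by
          refine setLIntegral_mono' measurableSet_Ico fun t ht => ?_
          gcongr
          have e : F n t = f n t := by
            simp only [hF]; rw [hpe n t ⟨ht.1, (ht.2.trans h3).le⟩]
          rw [← e]
          refine gk_le_gk g h4 ?_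
          have := h1 t ⟨ht.1, by linarith [ht.2, hl01.2]⟩
          rw [dist_comm] at this
          linarith
      _ ≤ ∫⁻ t in Ico 0 (L n), (1 + gk g n (f n t)) :=
          lintegral_mono_set (Ico_subset_Ico_right h3.le)
      _ ≤ a := hc n
  have key2 : ∀ k, ∫⁻ t in Ico 0 l, (1 + gk g k (G t)) ≤ a := by
    intro k
    have e : Ico 0 l = ⋃ m, Ico 0 (l - sc m) := by
      ext t
      simp only [mem_Ico, mem_iUnion]
      constructor
      · rintro ⟨h1, h2⟩
        obtain ⟨m, hm⟩ := (sc_tendsto.eventually (Iio_mem_nhds (show 0 < l - t by linarith))).exists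
        exact ⟨m, h1, by linarith [show sc m < l - t from hm]⟩
      · rintro ⟨m, h1, h2⟩
        exact ⟨h1, by linarith [sc_pos m]⟩
    rw [e, setLIntegral_iUnion_of_directed]
    · exact iSup_le fun m => key k _ (sc_pos m)
    · refine directed_of_isDirected_le fun i j hij => Ico_subset_Ico_right ?_
      linarith [sc_anti hij]
  refine ⟨⟨l, hl01.1, G, ?_⟩, hG0, hGx, ?_⟩
  · refine LipschitzOnWith.of_dist_le_mul fun s _ t _ => ?_
    simpa [Real.dist_eq] using hGl s t
  · unfold Curve.integral
    simp only
    rw [setLIntegral_congr (Ico_ae_eq_Icc (μ := volume) (a := (0:ℝ)) (b := l)).symm]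
    calc ∫⁻ t in Ico 0 l, (1 + g (G t)) ≤ ∫⁻ t in Ico 0 l, ⨆ k, (1 + gk g k (G t)) := by
          refine lintegral_mono fun t => ?_
          dsimp only
          rw [← ENNReal.add_iSup]
          gcongr
          exact le_iSup_gk hg _
      _ = ⨆ k, ∫⁻ t in Ico 0 l, (1 + gk g k (G t)) := by
          refine lintegral_iSup (fun k => ?_) ?_
          · exact measurable_const.add ((gk_measurable g k).comp hGc.measurable)
          · intro i j hij t
            dsimp only
            gcongr
            exact gk_mono g hij _
      _ ≤ a := iSup_le key2



lemma Doubling.pos {μ : Measure X} {Cd : ℝ} (h : Doubling μ Cd) (x : X) {r : ℝ} (hr : 0 < r) :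
    0 < μ (ball x r) := by
  have := (h.2 x (r / 2) (by linarith)).1
  rwa [mul_div_cancel₀ _ two_ne_zero] at this

lemma Doubling.fin {μ : Measure X} {Cd : ℝ} (h : Doubling μ Cd) (x : X) (r : ℝ) :
    μ (ball x r) < ∞ := by
  rcases le_or_gt r 0 with hr | hr
  · simp [ball_eq_empty.2 hr]
  · exact (h.2 x r hr).2.2

lemma Doubling.dbl {μ : Measure X} {Cd : ℝ} (h : Doubling μ Cd) (x : X) {r : ℝ} (hr : 0 < r) :
    μ (ball x (2 * r)) ≤ ENNReal.ofReal Cd * μ (ball x r) := (h.2 x r hr).2.1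

lemma Doubling.pow {μ : Measure X} {Cd : ℝ} (h : Doubling μ Cd) (x : X) {r : ℝ} (hr : 0 < r)
    (k : ℕ) : μ (ball x (2 ^ k * r)) ≤ ENNReal.ofReal Cd ^ k * μ (ball x r) := by
  induction k with
  | zero => simp
  | succ k ih =>
    have := h.dbl x (show 0 < 2 ^ k * r by positivity)
    rw [pow_succ', mul_assoc, pow_succ', mul_assoc]
    exact this.trans (by gcongr)

lemma Doubling.locFin {μ : Measure X} {Cd : ℝ} (h : Doubling μ Cd) :
    IsLocallyFiniteMeasure μ :=
  ⟨fun x => ⟨ball x 1, ball_mem_nhds x one_pos, h.fin x 1⟩⟩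

lemma Doubling.unif {μ : Measure X} {Cd : ℝ} (h : Doubling μ Cd) :
    IsUnifLocDoublingMeasure μ := by
  refine ⟨⟨(Cd.toNNReal) ^ 2, ?_⟩⟩
  filter_upwards [self_mem_nhdsWithin] with ε hε x
  have hε : 0 < ε := hε
  calc μ (closedBall x (2 * ε)) ≤ μ (ball x (2 ^ 2 * ε)) :=
        measure_mono (closedBall_subset_ball (by linarith))
    _ ≤ ENNReal.ofReal Cd ^ 2 * μ (ball x ε) := h.pow x hε 2
    _ ≤ _ := by
      rw [ENNReal.coe_pow]
      gcongr
      · rfl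
      · exact ball_subset_closedBall

lemma Doubling.proper {μ : Measure X} {Cd : ℝ} [CompleteSpace X] (h : Doubling μ Cd) :
    ProperSpace X := by
  refine ⟨fun x R => ?_⟩
  refine TotallyBounded.isCompact_of_isClosed ?_ isClosed_closedBall
  rw [Metric.totallyBounded_iff]
  intro ε hε
  by_contra hcon
  push Not at hcon
  have hR : 0 ≤ R := by
    by_contra hR
    push Not at hR
    refine hcon ∅ finite_empty ?_
    simp [closedBall_eq_empty.2 hR]
  obtain ⟨f, hf1, hf2⟩ := exists_seq_of_forall_finset_exists (fun y => y ∈ closedBall x R)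
    (fun y z => ε ≤ dist y z) (by
      intro s hs
      have := hcon s s.finite_toSet
      rw [not_subset] at this
      obtain ⟨y, hy, hy2⟩ := this
      refine ⟨y, hy, fun z hz => ?_⟩
      by_contra hlt
      push Not at hlt
      apply hy2
      simp only [mem_iUnion, mem_ball, exists_prop]
      exact ⟨z, hz, by rwa [dist_comm]⟩)
  obtain ⟨k, hk⟩ := pow_unbounded_of_one_lt ((2 * R + ε) / (ε / 2)) (one_lt_two (α := ℝ))
  rw [div_lt_iff₀ (by linarith)] at hk
  set m := μ (ball x (R + ε)) with hm
  have hm0 : 0 < m := h.pos x (by linarith)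
  have hmf : m < ∞ := h.fin x _
  have hC0 : ENNReal.ofReal Cd ^ k ≠ 0 :=
    pow_ne_zero _ (ENNReal.ofReal_pos.2 (lt_of_lt_of_le one_pos h.1)).ne'
  have hCt : ENNReal.ofReal Cd ^ k ≠ ∞ := ENNReal.pow_ne_top ENNReal.ofReal_ne_top
  have hlow : ∀ i, m / ENNReal.ofReal Cd ^ k ≤ μ (ball (f i) (ε / 2)) := by
    intro i
    rw [ENNReal.div_le_iff hC0 hCt, mul_comm]
    refine le_trans (measure_mono ?_) (h.pow (f i) (show 0 < ε / 2 by linarith) k)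
    refine ball_subset_ball' ?_
    have := hf1 i
    rw [mem_closedBall, dist_comm] at this
    linarith
  have hfin := Measure.finite_const_le_meas_of_disjoint_iUnion μ
    (ε := m / ENNReal.ofReal Cd ^ k) (ENNReal.div_pos hm0.ne' hCt)
    (As := fun i => ball (f i) (ε / 2)) (fun i => measurableSet_ball) (by
      intro i j hij
      rcases lt_or_gt_of_ne hij with hlt | hlt
      · exact ball_disjoint_ball (by linarith [hf2 i j hlt])
      · refine (ball_disjoint_ball ?_).symm
        linarith [hf2 j i hlt]) (by
      refine ne_of_lt (lt_of_le_of_lt (measure_mono ?_) hmf)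
      refine iUnion_subset fun i => ball_subset_ball' ?_
      have := hf1 i
      rw [mem_closedBall] at this
      linarith)
  have : {i | m / ENNReal.ofReal Cd ^ k ≤ μ (ball (f i) (ε / 2))} = univ :=
    eq_univ_of_forall hlow
  rw [this] at hfin
  exact infinite_univ hfin



/-- the mass of `h` at `z` is controlled on scales up to `R` -/
def Ctl (μ : Measure X) (h : X → ℝ≥0∞) (c R : ℝ) (z : X) : Prop :=
  ∀ r, 0 < r → r ≤ R → ∫⁻ y in ball z r, h y ∂μ ≤ ENNReal.ofReal c * μ (ball z r)

lemma intOn_of_lip {μ : Measure X} {Cd : ℝ} (hD : Doubling μ Cd) {f : X → ℝ} {L : ℝ≥0}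
    (hf : LipschitzWith L f) (z : X) (r : ℝ) : IntegrableOn f (ball z r) μ := by
  refine Measure.integrableOn_of_bounded (M := |f z| + L * r) (hD.fin z r).ne
    hf.continuous.measurable.aestronglyMeasurable ?_
  refine (ae_restrict_iff' measurableSet_ball).2 (Filter.Eventually.of_forall fun y hy => ?_)
  have h1 := hf.dist_le_mul y z
  rw [Real.dist_eq] at h1
  have h2 : (L : ℝ) * dist y z ≤ L * r := by
    have := (mem_ball.1 hy).le
    gcongr
  rw [Real.norm_eq_abs]
  have := abs_sub_abs_le_abs_sub (f y) (f z)
  linarith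

lemma avg_lip {μ : Measure X} {Cd : ℝ} (hD : Doubling μ Cd) {f : X → ℝ} {L : ℝ≥0}
    (hf : LipschitzWith L f) (z : X) {r : ℝ} (hr : 0 < r) (m b : ℝ)
    (hb : ⨍ y in ball z r, |f y - m| ∂μ ≤ b) :
    |(⨍ y in ball z r, f y ∂μ) - m| ≤ b := by
  have hi := intOn_of_lip hD hf z r
  have hpos : 0 < μ.real (ball z r) := ENNReal.toReal_pos (hD.pos z hr).ne' (hD.fin z r).ne
  refine le_trans ?_ hb
  have e : (⨍ y in ball z r, f y ∂μ) - m = (μ.real (ball z r))⁻¹ * ∫ y in ball z r, (f y - m) ∂μ := by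
    rw [setAverage_eq, integral_sub hi (integrableOn_const (hD.fin z r).ne), setIntegral_const]
    simp only [smul_eq_mul]
    field_simp
  rw [e, setAverage_eq, abs_mul, abs_of_pos (inv_pos.2 hpos), smul_eq_mul]
  gcongr
  exact abs_integral_le_integral_abs

lemma memL1Loc_of_lip {μ : Measure X} {Cd : ℝ} (hD : Doubling μ Cd) {f : X → ℝ} {L : ℝ≥0}
    (hf : LipschitzWith L f) : MemL1Loc μ univ f := by
  refine ⟨hf.continuous.measurable.aemeasurable, fun x _ => ⟨1, one_pos, ?_⟩⟩
  have := (intOn_of_lip hD hf x 1).2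
  rw [HasFiniteIntegral] at this
  rw [univ_inter]
  simpa [← ofReal_norm] using this

lemma avg_cmp {μ : Measure X} {Cd CP lam : ℝ} (hD : Doubling μ Cd) (hP : Poincare μ CP lam)
    {f : X → ℝ} {L : ℝ≥0} (hf : LipschitzWith L f) {h : X → ℝ≥0∞} (hh : IsUpperGradient f h)
    {c R : ℝ} (hc : 0 ≤ c) {z y : X} (hz : Ctl μ h c R z) {r s D : ℝ} (hr : 0 < r) (hs : 0 < s)
    (hR : lam * r ≤ R) (hsub : ball y s ⊆ ball z r) (hD0 : 0 ≤ D)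
    (hm : μ (ball z r) ≤ ENNReal.ofReal D * μ (ball y s)) :
    |(⨍ w in ball y s, f w ∂μ) - ⨍ w in ball z r, f w ∂μ| ≤ D * (CP * r * c) := by
  set m := ⨍ w in ball z r, f w ∂μ with hmdef
  have hCP : 0 ≤ CP := zero_le_one.trans hP.1
  have hlam : 0 < lam := zero_lt_one.trans_le hP.2.1
  have h1 : ⨍ w in ball z r, |f w - m| ∂μ ≤ CP * r * c := by
    have := hP.2.2 z r hr f h (memL1Loc_of_lip hD hf) hh
    have h2 : (∫⁻ y in ball z (lam * r), h y ∂μ) / μ (ball z (lam * r)) ≤ ENNReal.ofReal c := by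
      refine ENNReal.div_le_of_le_mul ?_
      exact hz _ (by positivity) hR
    have h3 := this.trans (mul_le_mul_right h2 _)
    rw [← ENNReal.ofReal_mul (by positivity)] at h3
    exact (ENNReal.ofReal_le_ofReal_iff (by positivity)).1 h3
  apply avg_lip hD hf y hs
  have hposz : 0 < μ.real (ball z r) := ENNReal.toReal_pos (hD.pos z hr).ne' (hD.fin z r).ne
  have hposy : 0 < μ.real (ball y s) := ENNReal.toReal_pos (hD.pos y hs).ne' (hD.fin y s).ne
  have hm' : μ.real (ball z r) ≤ D * μ.real (ball y s) := by
    have := ENNReal.toReal_mono (ENNReal.mul_ne_top ENNReal.ofReal_ne_top (hD.fin y s).ne) hm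
    rwa [ENNReal.toReal_mul, ENNReal.toReal_ofReal hD0] at this
  have hi : IntegrableOn (fun w => |f w - m|) (ball z r) μ :=
    ((intOn_of_lip hD hf z r).sub (integrableOn_const (hD.fin z r).ne)).abs
  have hmono : ∫ w in ball y s, |f w - m| ∂μ ≤ ∫ w in ball z r, |f w - m| ∂μ :=
    setIntegral_mono_set hi (Filter.Eventually.of_forall fun w => abs_nonneg _)
      hsub.eventuallyLE
  rw [setAverage_eq, smul_eq_mul] at h1 ⊢
  rw [inv_mul_le_iff₀ hposz] at h1
  rw [inv_mul_le_iff₀ hposy]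
  calc _ ≤ _ := hmono
    _ ≤ _ := h1
    _ ≤ (D * μ.real (ball y s)) * (CP * r * c) := by gcongr
    _ = _ := by ring

lemma avg_tele {μ : Measure X} {Cd CP lam : ℝ} (hD : Doubling μ Cd) (hP : Poincare μ CP lam)
    {f : X → ℝ} {L : ℝ≥0} (hf : LipschitzWith L f) {h : X → ℝ≥0∞} (hh : IsUpperGradient f h)
    {c R : ℝ} (hc : 0 ≤ c) {z : X} (hz : Ctl μ h c R z) {r : ℝ} (hr : 0 < r)
    (hR : lam * r ≤ R) :
    |(⨍ w in ball z r, f w ∂μ) - f z| ≤ 2 * (Cd * (CP * r * c)) := by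
  have hlam : 0 < lam := zero_lt_one.trans_le hP.2.1
  have hCd : 0 ≤ Cd := zero_le_one.trans hD.1
  set a : ℕ → ℝ := fun k => ⨍ w in ball z (r / 2 ^ k), f w ∂μ with ha
  have h1 : ∀ k, dist (a k) (a (k + 1)) ≤ 2 * (Cd * (CP * r * c)) / 2 / 2 ^ k := by
    intro k
    have hrk : 0 < r / 2 ^ (k + 1) := by positivity
    have e : r / 2 ^ k = 2 * (r / 2 ^ (k + 1)) := by rw [pow_succ]; field_simp
    have := avg_cmp hD hP hf hh hc hz (y := z) (r := r / 2 ^ k) (s := r / 2 ^ (k + 1)) (D := Cd)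
      (by positivity) hrk (le_trans (by gcongr; exact div_le_self hr.le (one_le_pow₀ one_le_two)) hR)
      (ball_subset_ball (by rw [e]; linarith)) hCd (by rw [e]; exact hD.dbl z hrk)
    rw [dist_comm, Real.dist_eq]
    refine this.trans (le_of_eq ?_)
    field_simp
  have h2 : Tendsto a atTop (𝓝 (f z)) := by
    rw [tendsto_iff_dist_tendsto_zero]
    have e : Tendsto (fun k : ℕ => (L : ℝ) * (r * (1 / 2 : ℝ) ^ k)) atTop (𝓝 (L * (r * 0))) :=
      ((tendsto_pow_atTop_nhds_zero_of_lt_one (by norm_num) (by norm_num)).const_mul r).const_mul _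
    rw [mul_zero, mul_zero] at e
    refine squeeze_zero (fun k => dist_nonneg) (fun k => ?_) e
    have hrk : 0 < r / 2 ^ k := by positivity
    rw [Real.dist_eq]
    apply avg_lip hD hf z hrk
    have hpos : 0 < μ.real (ball z (r / 2 ^ k)) :=
      ENNReal.toReal_pos (hD.pos z hrk).ne' (hD.fin z _).ne
    rw [setAverage_eq, smul_eq_mul, inv_mul_le_iff₀ hpos]
    have hi : IntegrableOn (fun w => |f w - f z|) (ball z (r / 2 ^ k)) μ :=
      ((intOn_of_lip hD hf z _).sub (integrableOn_const (hD.fin z _).ne)).abs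
    calc ∫ w in ball z (r / 2 ^ k), |f w - f z| ∂μ
        ≤ ∫ w in ball z (r / 2 ^ k), (L : ℝ) * (r * (1 / 2 : ℝ) ^ k) ∂μ := by
          refine setIntegral_mono_on hi (integrableOn_const (hD.fin z _).ne) measurableSet_ball
            fun w hw => ?_
          have := hf.dist_le_mul w z
          rw [Real.dist_eq] at this
          refine this.trans ?_
          have h3 := (mem_ball.1 hw).le
          have : r * (1 / 2 : ℝ) ^ k = r / 2 ^ k := by rw [one_div, inv_pow]; rfl
          rw [this]
          gcongr
      _ = _ := by rw [setIntegral_const, smul_eq_mul]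
  have := dist_le_of_le_geometric_two_of_tendsto₀ h1 h2
  simpa [ha, Real.dist_eq] using this

lemma holder {μ : Measure X} {Cd CP lam : ℝ} (hD : Doubling μ Cd) (hP : Poincare μ CP lam)
    {f : X → ℝ} {L : ℝ≥0} (hf : LipschitzWith L f) {h : X → ℝ≥0∞} (hh : IsUpperGradient f h)
    {c R : ℝ} (hc : 0 ≤ c) {x y : X} (hx : Ctl μ h c R x) (hy : Ctl μ h c R y) (hxy : x ≠ y)
    (hR : lam * (2 * dist x y) ≤ R) :
    |f x - f y| ≤ 8 * Cd ^ 2 * CP * c * dist x y := by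
  have hlam : 0 < lam := zero_lt_one.trans_le hP.2.1
  have hCd : 1 ≤ Cd := hD.1
  have hCP : 0 ≤ CP := zero_le_one.trans hP.1
  set d := dist x y with hd
  have hd0 : 0 < d := dist_pos.2 hxy
  have h1 := avg_tele hD hP hf hh hc hx (r := 2 * d) (by linarith) hR
  have h2 := avg_tele hD hP hf hh hc hy (r := d) hd0 (by nlinarith)
  have h3 := avg_cmp hD hP hf hh hc hx (y := y) (r := 2 * d) (s := d) (D := Cd ^ 2) (by linarith)
    hd0 hR (ball_subset_ball' (by rw [dist_comm]; linarith)) (by positivity) (by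
      rw [ENNReal.ofReal_pow (by linarith)]
      refine le_trans (measure_mono ?_) (hD.pow y hd0 2)
      exact ball_subset_ball' (by linarith))
  have hq : 0 ≤ CP * d * c := by positivity
  have hq2 : Cd * (CP * d * c) ≤ Cd ^ 2 * (CP * d * c) := by
    gcongr; nlinarith
  rw [abs_le] at h1 h2 h3 ⊢
  constructor <;> nlinarith

lemma u_est {μ : Measure X} [ProperSpace X] {Cd CP lam : ℝ} (hD : Doubling μ Cd)
    (hP : Poincare μ CP lam) {u : X → ℝ} {g : X → ℝ≥0∞} (hg : LowerSemicontinuous g)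
    (hu : ∀ γ, UGIneq u g γ) {c R : ℝ} (hc : 0 < c) {x y : X}
    (hx : Ctl μ (fun x => 1 + g x) c R x) (hy : Ctl μ (fun x => 1 + g x) c R y)
    (hR : lam * (2 * dist x y) ≤ R) (h1 : 9 * Cd ^ 2 * CP * c * dist x y ≤ 1) :
    |u x - u y| ≤ 9 * Cd ^ 2 * CP * c * dist x y := by
  rcases eq_or_ne x y with rfl | hxy
  · simp
  have hCd : 0 < Cd := zero_lt_one.trans_le hD.1
  have hCP : 0 < CP := zero_lt_one.trans_le hP.1
  have hd0 : 0 < dist x y := dist_pos.2 hxy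
  have hq : 0 < Cd ^ 2 * CP * c * dist x y := by positivity
  obtain ⟨γ, e1, e2, e3⟩ := exists_curve (K := {x}) isClosed_singleton hg (x := y)
    (a := ENNReal.ofReal (9 * Cd ^ 2 * CP * c * dist x y)) (by simpa using ENNReal.ofReal_le_ofReal h1) (by
      intro n
      have := holder hD hP (vr_lip {x} g n) (h := fun x => 1 + g x)
        ⟨measurable_const.add hg.measurable, fun γ => ugineq_mono (vr_ug {x} g n γ)
          (fun z => indicator_le_self _ _ z)⟩ hc.le hx hy hxy hR
      rw [vr_zero (mem_singleton x), zero_sub, abs_neg, abs_of_nonneg (vr_nonneg _ _ _ _)] at this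
      unfold vr at this
      rw [ENNReal.lt_ofReal_iff_toReal_lt (cd_ne_top _ _ _ _)]
      linarith)
  have h2 := hu γ
  unfold UGIneq at h2
  rw [mem_singleton_iff.1 e1, e2] at h2
  refine (ENNReal.ofReal_le_ofReal_iff (by linarith)).1 (h2.trans (le_trans ?_ e3))
  exact lintegral_mono fun t => le_add_self

lemma u_cont {μ : Measure X} [ProperSpace X] {Cd CP lam : ℝ} (hD : Doubling μ Cd)
    (hP : Poincare μ CP lam) {u : X → ℝ} {g : X → ℝ≥0∞} (hg : LowerSemicontinuous g)
    (hu : ∀ γ, UGIneq u g γ) {c R : ℝ} (hc : 0 < c) (hR : 0 < R) {S : Set X}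
    (hS : ∀ x ∈ S, Ctl μ (fun x => 1 + g x) c R x) : ContinuousOn u S := by
  have hCd : 0 < Cd := zero_lt_one.trans_le hD.1
  have hCP : 0 < CP := zero_lt_one.trans_le hP.1
  have hlam : 0 < lam := zero_lt_one.trans_le hP.2.1
  set Q := 9 * Cd ^ 2 * CP * c with hQ
  have hQ0 : 0 < Q := by positivity
  rw [Metric.continuousOn_iff]
  intro x hx ε hε
  refine ⟨min (R / (2 * lam)) (min 1 ε / Q), by positivity, fun y hy hd => ?_⟩
  have d1 : dist y x < R / (2 * lam) := hd.trans_le (min_le_left _ _)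
  have d2 : dist y x < min 1 ε / Q := hd.trans_le (min_le_right _ _)
  rw [lt_div_iff₀ (by positivity)] at d1 d2
  have d3 := min_le_left 1 ε
  have d4 := min_le_right 1 ε
  have := u_est hD hP hg hu hc (hS y hy) (hS x hx) (by linarith) (by rw [← hQ]; linarith)
  rw [← hQ] at this
  rw [Real.dist_eq]
  linarith



lemma ctl_closure {μ : Measure X} {Cd : ℝ} (hD : Doubling μ Cd) {h : X → ℝ≥0∞} {c R : ℝ}
    (hc : 0 ≤ c) {z : X} (hz : z ∈ closure {x | Ctl μ h c R x}) :
    Ctl μ h (c * Cd ^ 2) (R / 2) z := by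
  intro r hr hrR
  obtain ⟨x, hx, hxz⟩ := Metric.mem_closure_iff.1 hz r hr
  have hCd : 0 ≤ Cd := zero_le_one.trans hD.1
  calc ∫⁻ y in ball z r, h y ∂μ ≤ ∫⁻ y in ball x (2 * r), h y ∂μ :=
        lintegral_mono_set (ball_subset_ball' (by linarith))
    _ ≤ ENNReal.ofReal c * μ (ball x (2 * r)) := hx _ (by linarith) (by linarith)
    _ ≤ ENNReal.ofReal c * μ (ball z (2 ^ 2 * r)) := by
        gcongr
        exact ball_subset_ball' (by rw [dist_comm]; linarith)
    _ ≤ ENNReal.ofReal c * (ENNReal.ofReal Cd ^ 2 * μ (ball z r)) := by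
        gcongr
        exact hD.pow z hr 2
    _ = _ := by rw [ENNReal.ofReal_mul hc, ENNReal.ofReal_pow hCd, mul_assoc]

lemma ae_ctl {μ : Measure X} [ProperSpace X] {Cd : ℝ} (hD : Doubling μ Cd) {g : X → ℝ≥0∞}
    (hg : Measurable g) (hi : ∫⁻ x, g x ∂μ ≠ ∞) :
    ∀ᵐ x ∂μ, ∃ n : ℕ, Ctl μ (fun x => 1 + g x) (n + 1) (sc n) x := by
  have := hD.locFin
  have := hD.unif
  have hCd : 1 ≤ Cd := hD.1
  filter_upwards [(IsUnifLocDoublingMeasure.vitaliFamily μ 1).ae_tendsto_lintegral_div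
    hg.aemeasurable hi, ae_lt_top hg hi] with x hx hx2
  have h1 := IsUnifLocDoublingMeasure.tendsto_closedBall_filterAt μ (K := 1) (x := x)
    (l := 𝓝[>] (0:ℝ)) (fun _ => x) (fun δ => δ) tendsto_id (by
      filter_upwards [self_mem_nhdsWithin] with δ hδ
      exact mem_closedBall_self (by simpa using (le_of_lt hδ)))
  obtain ⟨M, hM⟩ := ENNReal.exists_nat_gt hx2.ne
  have h2 := (hx.comp h1).eventually (Iio_mem_nhds hM)
  rw [eventually_nhdsWithin_iff, Metric.eventually_nhds_iff] at h2
  obtain ⟨δ, hδ, h3⟩ := h2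
  obtain ⟨N, hN⟩ := exists_nat_gt (M * Cd)
  obtain ⟨n, hn1, hn2⟩ := ((sc_tendsto.eventually (Iio_mem_nhds hδ)).and
    (eventually_ge_atTop N)).exists
  refine ⟨n, fun r hr hrn => ?_⟩
  have h4 : (∫⁻ y in closedBall x r, g y ∂μ) / μ (closedBall x r) < M := by
    refine h3 ?_ hr
    rw [Real.dist_eq, sub_zero, abs_of_pos hr]
    exact lt_of_le_of_lt hrn hn1
  have hcb : μ (closedBall x r) ≤ μ (ball x (2 * r)) :=
    measure_mono (closedBall_subset_ball (by linarith))
  have hpos : μ (closedBall x r) ≠ 0 :=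
    ((hD.pos x hr).trans_le (measure_mono ball_subset_closedBall)).ne'
  have hfin : μ (closedBall x r) ≠ ∞ := (hcb.trans_lt (hD.fin x _)).ne
  have h5 := (ENNReal.div_le_iff hpos hfin).1 h4.le
  have hN' : (N : ℝ) ≤ n := by exact_mod_cast hn2
  rw [lintegral_add_left measurable_const, setLIntegral_const, one_mul]
  calc μ (ball x r) + ∫⁻ y in ball x r, g y ∂μ
      ≤ μ (ball x r) + M * (ENNReal.ofReal Cd * μ (ball x r)) := by
        gcongr
        refine (lintegral_mono_set ball_subset_closedBall).trans (h5.trans ?_)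
        gcongr
        exact hcb.trans (hD.dbl x hr)
    _ = ENNReal.ofReal (1 + M * Cd) * μ (ball x r) := by
        rw [ENNReal.ofReal_add (by norm_num) (by positivity), ENNReal.ofReal_mul (by positivity),
          ENNReal.ofReal_one, ENNReal.ofReal_natCast]
        ring
    _ ≤ ENNReal.ofReal (n + 1) * μ (ball x r) := by
        gcongr ENNReal.ofReal ?_ * _
        linarith

lemma exists_open_small {μ : Measure X} [ProperSpace X] {Cd CP lam : ℝ} (hD : Doubling μ Cd)
    (hP : Poincare μ CP lam) {u : X → ℝ} {g : X → ℝ≥0∞} (hg : LowerSemicontinuous g)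
    (hi : ∫⁻ x, g x ∂μ ≠ ∞) (hu : ∀ γ, UGIneq u g γ) {ε : ℝ≥0∞} (hε : ε ≠ 0) :
    ∃ U : Set X, IsOpen U ∧ μ U ≤ 4 * (∫⁻ x, ENNReal.ofReal |u x| ∂μ) + ε ∧
      ∀ x ∉ U, u x ≤ 1 / 4 := by
  have := hD.locFin
  have hCd : 0 < Cd := zero_lt_one.trans_le hD.1
  set A : ℕ → Set X := fun n => closure {x | Ctl μ (fun x => 1 + g x) (n + 1) (sc n) x} with hA
  have hAc : ∀ n, IsClosed (A n) := fun n => isClosed_closure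
  have hcont : ∀ n, ContinuousOn u (A n) := fun n =>
    u_cont hD hP hg hu (c := ((n : ℝ) + 1) * Cd ^ 2) (by positivity)
      (show 0 < sc n / 2 by linarith [sc_pos n]) (fun x hx => ctl_closure hD (by positivity) hx)
  set F : Set X := ⋃ n, A n ∩ u ⁻¹' Iic (1 / 4) with hF
  have hFm : MeasurableSet F := MeasurableSet.iUnion fun n =>
    ((hcont n).preimage_isClosed_of_isClosed (hAc n) isClosed_Iic).measurableSet
  set E : Set X := (⋃ n, A n) \ F with hE
  have hEm : MeasurableSet E := (MeasurableSet.iUnion fun n => (hAc n).measurableSet).diff hFm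
  have hEu : ∀ x ∈ E, 1 / 4 ≤ u x := by
    rintro x ⟨h1, h2⟩
    obtain ⟨n, hn⟩ := mem_iUnion.1 h1
    by_contra hcon
    push Not at hcon
    exact h2 (mem_iUnion.2 ⟨n, hn, hcon.le⟩)
  have hμE : μ E ≤ 4 * ∫⁻ x, ENNReal.ofReal |u x| ∂μ := by
    calc μ E = 4 * ∫⁻ x in E, ENNReal.ofReal (1 / 4) ∂μ := by
          rw [setLIntegral_const, ← mul_assoc]
          have : (4 : ℝ≥0∞) * ENNReal.ofReal (1 / 4) = 1 := by
            rw [show (4 : ℝ≥0∞) = ENNReal.ofReal 4 by simp, ← ENNReal.ofReal_mul (by norm_num)]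
            norm_num
          rw [this, one_mul]
      _ ≤ 4 * ∫⁻ x in E, ENNReal.ofReal |u x| ∂μ := by
          gcongr 4 * ?_
          exact setLIntegral_mono' hEm fun x hx =>
            ENNReal.ofReal_le_ofReal ((hEu x hx).trans (le_abs_self _))
      _ ≤ _ := by gcongr 4 * ?_; exact setLIntegral_le_lintegral _ _
  have hnull : μ (⋃ n, A n)ᶜ = 0 := by
    have := ae_ctl hD hg.measurable hi
    rw [ae_iff] at this
    refine measure_mono_null (fun x hx => ?_) this
    rintro ⟨n, hn⟩
    exact hx (mem_iUnion.2 ⟨n, subset_closure hn⟩)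
  have hFc : μ Fᶜ ≤ 4 * ∫⁻ x, ENNReal.ofReal |u x| ∂μ := by
    calc μ Fᶜ ≤ μ (E ∪ (⋃ n, A n)ᶜ) := by
          refine measure_mono fun x hx => ?_
          by_cases h : x ∈ ⋃ n, A n
          · exact Or.inl ⟨h, hx⟩
          · exact Or.inr h
      _ ≤ μ E + μ (⋃ n, A n)ᶜ := measure_union_le _ _
      _ ≤ _ := by rw [hnull, add_zero]; exact hμE
  obtain ⟨U, hU1, hU2, hU3⟩ := Set.exists_isOpen_le_add Fᶜ μ hε
  refine ⟨U, hU2, hU3.trans (by gcongr), fun x hx => ?_⟩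
  have : x ∈ F := by
    by_contra h
    exact hx (hU1 h)
  obtain ⟨n, hn⟩ := mem_iUnion.1 this
  exact hn.2



lemma zeroMod_empty (μ : Measure X) : ZeroMod μ (∅ : Set (Curve X)) :=
  ⟨0, measurable_zero, by simp, fun _ h => h.elim⟩

lemma wug_of_ug {μ : Measure X} {u : X → ℝ} {g : X → ℝ≥0∞} (hg : Measurable g)
    (h : ∀ γ, UGIneq u g γ) : IsWeakUpperGradientOn μ u g univ := by
  refine ⟨hg.aemeasurable, ?_⟩
  have : {γ : Curve X | γ.In univ ∧ ¬ UGIneq u g γ} = ∅ := by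
    ext γ; simp [h γ]
  rw [this]
  exact zeroMod_empty μ

lemma exists_lsc_ug {μ : Measure X} [μ.WeaklyRegular] [SigmaFinite μ] {u : X → ℝ} {g : X → ℝ≥0∞}
    (h : IsWeakUpperGradientOn μ u g univ) {ε : ℝ≥0∞} (hε : ε ≠ 0) :
    ∃ g' : X → ℝ≥0∞, LowerSemicontinuous g' ∧ (∀ γ, UGIneq u g' γ) ∧
      ∫⁻ x, g' x ∂μ ≤ ∫⁻ x, g x ∂μ + ε + ε := by
  obtain ⟨hg, ρ, hρm, hρi, hρ⟩ := h
  obtain ⟨c, hc, hcε⟩ := exists_pos_mul_le hρi hε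
  set N := toMeasurable μ {x | ¬ (g x = hg.mk g x)} with hN
  have hN0 : μ N = 0 := by
    rw [hN, measure_toMeasurable]; exact hg.ae_eq_mk
  have hNm : MeasurableSet N := measurableSet_toMeasurable _ _
  set g1 : X → ℝ≥0∞ := fun x => (hg.mk g x + N.indicator (fun _ => ∞) x) + c * ρ x with hg1
  have hg1m : Measurable g1 :=
    (hg.measurable_mk.add (measurable_const.indicator hNm)).add (hρm.const_mul _)
  have hle : ∀ x, g x ≤ g1 x := by
    intro x
    by_cases hx : x ∈ N
    · simp [hg1, hx]
    · have : g x = hg.mk g x := by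
        by_contra hcon
        exact hx (subset_toMeasurable _ _ hcon)
      rw [this]
      simp only [hg1, add_assoc]
      exact le_self_add
  have hint : ∫⁻ x, g1 x ∂μ ≤ ∫⁻ x, g x ∂μ + ε := by
    simp only [hg1]
    rw [lintegral_add_right _ (hρm.const_mul _),
      lintegral_add_right _ (measurable_const.indicator hNm), lintegral_const_mul _ hρm,
      lintegral_indicator hNm, setLIntegral_const, hN0, mul_zero, add_zero,
      lintegral_congr_ae hg.ae_eq_mk.symm]
    gcongr
  obtain ⟨g2, h1, h2, h3⟩ := exists_le_lowerSemicontinuous_lintegral_ge μ g1 hg1m hε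
  refine ⟨g2, h2, fun γ => ?_, h3.trans (by gcongr)⟩
  by_cases hγ : UGIneq u g γ
  · exact ugineq_mono hγ fun x => (hle x).trans (h1 x)
  · have : γ.integral ρ = ∞ := hρ γ ⟨fun _ _ => mem_univ _, hγ⟩
    have h4 : γ.integral (fun x => c * ρ x) = ∞ := by
      rw [integral_mul_curve γ hρm, this, ENNReal.mul_top (by exact_mod_cast hc.ne')]
    have h5 : γ.integral g2 = ∞ := by
      refine top_unique (h4 ▸ lintegral_mono fun t => ?_)
      exact le_trans le_add_self (h1 _)
    unfold UGIneq
    rw [h5]; exact le_top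

/-- the limit function -/
def vs (K : Set X) (g : X → ℝ≥0∞) (x : X) : ℝ := ⨆ n, vr K g n x

lemma vr_bdd (K : Set X) (g : X → ℝ≥0∞) (x : X) : BddAbove (range fun n => vr K g n x) :=
  ⟨1, by rintro _ ⟨n, rfl⟩; exact vr_le_one K g n x⟩

lemma vs_tendsto (K : Set X) (g : X → ℝ≥0∞) (x : X) :
    Tendsto (fun n => vr K g n x) atTop (𝓝 (vs K g x)) :=
  tendsto_atTop_ciSup (fun _ _ h => vr_mono K g h x) (vr_bdd K g x)

lemma le_vs (K : Set X) (g : X → ℝ≥0∞) (n : ℕ) (x : X) : vr K g n x ≤ vs K g x :=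
  le_ciSup (vr_bdd K g x) n

lemma vs_le_one (K : Set X) (g : X → ℝ≥0∞) (x : X) : vs K g x ≤ 1 :=
  ciSup_le fun n => vr_le_one K g n x

lemma vs_nonneg (K : Set X) (g : X → ℝ≥0∞) (x : X) : 0 ≤ vs K g x :=
  (vr_nonneg K g 0 x).trans (le_vs K g 0 x)

lemma vs_zero {K : Set X} {g : X → ℝ≥0∞} {x : X} (h : x ∈ K) : vs K g x = 0 := by
  simp [vs, vr_zero h]

lemma vs_ug (K : Set X) (g : X → ℝ≥0∞) (γ : Curve X) :
    UGIneq (vs K g) (Kᶜ.indicator fun x => 1 + g x) γ := by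
  unfold UGIneq
  have h1 := ((ENNReal.continuous_ofReal.tendsto _).comp
    ((vs_tendsto K g (γ.toFun 0)).sub (vs_tendsto K g (γ.toFun γ.len))).abs)
  exact le_of_tendsto' h1 fun n => vr_ug K g n γ

/-- the superlevel sets -/
def Vt (K : Set X) (g : X → ℝ≥0∞) (t : ℝ) : Set X := {x | ∃ n, t < vr K g n x}

lemma isOpen_Vt (K : Set X) (g : X → ℝ≥0∞) (t : ℝ) : IsOpen (Vt K g t) := by
  have : Vt K g t = ⋃ n, (vr K g n) ⁻¹' Ioi t := by ext x; simp [Vt]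
  rw [this]
  exact isOpen_iUnion fun n => isOpen_Ioi.preimage (vr_lip K g n).continuous

lemma capa_Vt {μ : Measure X} {K : Set X} (hK : IsClosed K) {g : X → ℝ≥0∞} (hg : Measurable g)
    {t : ℝ} (ht : 1 / 4 ≤ t) (hf : 4 * μ Kᶜ + 4 * (∫⁻ x in Kᶜ, (1 + g x) ∂μ) < ∞) :
    capa1 μ (Vt K g t) ≤ 4 * μ Kᶜ + 4 * ∫⁻ x in Kᶜ, (1 + g x) ∂μ := by
  have hKm : MeasurableSet Kᶜ := hK.isOpen_compl.measurableSet
  have hm : Measurable (Kᶜ.indicator fun x => 1 + g x) := (measurable_const.add hg).indicator hKm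
  set w : X → ℝ := fun x => 4 * vs K g x with hw
  have hN : NNorm μ univ w ≤ 4 * μ Kᶜ + 4 * ∫⁻ x in Kᶜ, (1 + g x) ∂μ := by
    unfold NNorm
    rw [Measure.restrict_univ]
    refine add_le_add ?_ ?_
    · calc ∫⁻ x, ENNReal.ofReal |w x| ∂μ ≤ ∫⁻ x, Kᶜ.indicator (fun _ => 4) x ∂μ := by
            refine lintegral_mono fun x => ?_
            by_cases hx : x ∈ K
            · simp [hw, vs_zero hx]
            · rw [indicator_of_mem (show x ∈ Kᶜ from hx)]
              rw [show (4 : ℝ≥0∞) = ENNReal.ofReal 4 by simp]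
              refine ENNReal.ofReal_le_ofReal ?_
              simp only [hw]
              rw [abs_of_nonneg (by linarith [vs_nonneg K g x])]
              linarith [vs_le_one K g x]
        _ = _ := by rw [lintegral_indicator hKm, setLIntegral_const]
    · refine iInf₂_le_of_le (fun x => 4 * Kᶜ.indicator (fun x => 1 + g x) x)
        (wug_of_ug (hm.const_mul _) fun γ => ?_) ?_
      · unfold UGIneq
        rw [integral_mul_curve γ hm]
        have := vs_ug K g γ
        unfold UGIneq at this
        simp only [hw]
        rw [← mul_sub, abs_mul, ENNReal.ofReal_mul (abs_nonneg _)]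
        gcongr
        simp
      · rw [lintegral_const_mul _ hm, lintegral_indicator hKm]
  unfold capa1
  refine iInf_le_of_le w (iInf₂_le_of_le (lt_of_le_of_lt hN hf) (fun x hx => ?_) hN)
  obtain ⟨n, hn⟩ := hx
  have := le_vs K g n x
  simp only [hw]; linarith

/-- cut-off function -/
def wn (K : Set X) (g : X → ℝ≥0∞) (t : ℝ) (n : ℕ) (x : X) : ℝ :=
  max 0 (min 1 (((n : ℝ) + 1) * (vr K g n x - t)))

lemma wn_diff (K : Set X) (g : X → ℝ≥0∞) (t : ℝ) (n : ℕ) (x y : X) :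
    |wn K g t n x - wn K g t n y| ≤ ((n : ℝ) + 1) * |vr K g n x - vr K g n y| := by
  unfold wn
  refine (abs_max_sub_max_le_max _ _ _ _).trans ?_
  rw [sub_self, abs_zero, max_eq_right (abs_nonneg _)]
  refine (abs_min_sub_min_le_max _ _ _ _).trans ?_
  rw [sub_self, abs_zero, max_eq_right (abs_nonneg _), ← mul_sub, abs_mul,
    abs_of_nonneg (by positivity)]
  simp

lemma wn_nonneg (K : Set X) (g : X → ℝ≥0∞) (t : ℝ) (n : ℕ) (x : X) : 0 ≤ wn K g t n x :=
  le_max_left _ _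

lemma wn_le_one (K : Set X) (g : X → ℝ≥0∞) (t : ℝ) (n : ℕ) (x : X) : wn K g t n x ≤ 1 :=
  max_le zero_le_one (min_le_left _ _)

lemma wn_lip (K : Set X) (g : X → ℝ≥0∞) (t : ℝ) (n : ℕ) :
    LipschitzWith (((n : ℝ≥0) + 1) * ((n : ℝ≥0) + 1)) (wn K g t n) := by
  refine LipschitzWith.of_dist_le_mul fun x y => ?_
  rw [Real.dist_eq]
  refine (wn_diff K g t n x y).trans ?_
  have := (vr_lip K g n).dist_le_mul x y
  rw [Real.dist_eq] at this
  push_cast at this ⊢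
  rw [mul_assoc]
  gcongr

/-- gradient of the cut-off -/
def gn (K : Set X) (g : X → ℝ≥0∞) (t : ℝ) (n : ℕ) (x : X) : ℝ≥0∞ :=
  indicator {p : ℝ × X | p.1 < vr K g n p.2 ∧ vr K g n p.2 < p.1 + sc n}
    (fun p => ((n : ℝ≥0∞) + 1) * (Kᶜ.indicator (fun x => 1 + g x) p.2)) (t, x)

lemma gn_meas {K : Set X} (hK : IsClosed K) {g : X → ℝ≥0∞} (hg : Measurable g) (n : ℕ) :
    Measurable (fun p : ℝ × X => gn K g p.1 n p.2) := by
  unfold gn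
  have hv : Measurable (fun p : ℝ × X => vr K g n p.2) :=
    (vr_lip K g n).continuous.measurable.comp measurable_snd
  refine Measurable.indicator ?_ ?_
  · refine Measurable.const_mul ?_ _
    exact ((measurable_const.add hg).indicator hK.isOpen_compl.measurableSet).comp measurable_snd
  · exact (measurableSet_lt measurable_fst hv).inter
      (measurableSet_lt hv (measurable_fst.add_const _))

lemma wn_ug (K : Set X) (g : X → ℝ≥0∞) {t : ℝ} (ht : 0 ≤ t) (n : ℕ) (γ : Curve X) :
    UGIneq (wn K g t n) (gn K g t n) γ := by
  refine ug_of_slope (wn_lip K g t n) (fun x => ?_) γ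
  have hn : (0:ℝ) < (n:ℝ) + 1 := by positivity
  rcases le_or_gt (vr K g n x) t with h1 | h1
  · left; left
    refine Eventually.of_forall fun y => ?_
    have : wn K g t n x = 0 := by
      unfold wn
      refine max_eq_left ((min_le_right _ _).trans ?_)
      nlinarith
    rw [this]; exact wn_nonneg _ _ _ _ _
  rcases le_or_gt (t + sc n) (vr K g n x) with h2 | h2
  · left; right
    refine Eventually.of_forall fun y => ?_
    have : wn K g t n x = 1 := by
      unfold wn
      have h3 : 1 ≤ ((n:ℝ) + 1) * (vr K g n x - t) := by
        have : ((n:ℝ) + 1) * sc n = 1 := by unfold sc; field_simp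
        linarith [mul_le_mul_of_nonneg_left (show sc n ≤ vr K g n x - t by linarith) hn.le]
      rw [min_eq_left h3]; simp
    rw [this]; exact wn_le_one _ _ _ _ _
  · right
    have hxK : x ∈ Kᶜ := by
      intro hx
      rw [vr_zero hx] at h1; linarith
    have e : gn K g t n x = ((n : ℝ≥0∞) + 1) * (1 + g x) := by
      unfold gn
      rw [indicator_of_mem (by exact ⟨h1, h2⟩)]
      simp only
      rw [indicator_of_mem hxK]
    filter_upwards [vr_slope K g n x] with y hy
    rw [e, mul_assoc]
    refine (ENNReal.ofReal_le_ofReal (wn_diff K g t n y x)).trans ?_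
    rw [ENNReal.ofReal_mul hn.le]
    gcongr
    rw [ENNReal.ofReal_add (by positivity) zero_le_one]
    simp

lemma gn_int_le {μ : Measure X} {K : Set X} (hK : IsClosed K) {g : X → ℝ≥0∞} (hg : Measurable g)
    (t : ℝ) (n : ℕ) :
    ∫⁻ x, gn K g t n x ∂μ ≤ ((n : ℝ≥0∞) + 1) * ∫⁻ x in Kᶜ, (1 + g x) ∂μ := by
  have hKm : MeasurableSet Kᶜ := hK.isOpen_compl.measurableSet
  have hm : Measurable (Kᶜ.indicator fun x => 1 + g x) := (measurable_const.add hg).indicator hKm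
  rw [← lintegral_indicator hKm, ← lintegral_const_mul _ hm]
  refine lintegral_mono fun x => ?_
  unfold gn
  exact indicator_le_self _ _ _

lemma gn_avg {μ : Measure X} [SFinite μ] {K : Set X} (hK : IsClosed K) {g : X → ℝ≥0∞}
    (hg : Measurable g) (n : ℕ) :
    ∫⁻ t in Ioo (1 / 4 : ℝ) (1 / 2), (∫⁻ x, gn K g t n x ∂μ) ≤ ∫⁻ x in Kᶜ, (1 + g x) ∂μ := by
  have hKm : MeasurableSet Kᶜ := hK.isOpen_compl.measurableSet
  rw [lintegral_lintegral_swap (gn_meas hK hg n).aemeasurable, ← lintegral_indicator hKm]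
  refine lintegral_mono fun x => ?_
  refine (setLIntegral_le_lintegral _ _).trans ?_
  calc ∫⁻ t, gn K g t n x
      = ∫⁻ t, (Ioo (vr K g n x - sc n) (vr K g n x)).indicator
        (fun _ => ((n : ℝ≥0∞) + 1) * (Kᶜ.indicator (fun x => 1 + g x) x)) t := by
        refine lintegral_congr fun t => ?_
        unfold gn
        by_cases h : t ∈ Ioo (vr K g n x - sc n) (vr K g n x)
        · rw [indicator_of_mem h, indicator_of_mem]
          exact ⟨h.2, by linarith [h.1]⟩
        · rw [indicator_of_notMem h, indicator_of_notMem]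
          rintro ⟨h1, h2⟩
          exact h ⟨by dsimp only at h2; linarith, h1⟩
    _ = Kᶜ.indicator (fun x => 1 + g x) x * (((n : ℝ≥0∞) + 1) * ENNReal.ofReal (sc n)) := by
        rw [lintegral_indicator measurableSet_Ioo, setLIntegral_const, Real.volume_Ioo]
        rw [sub_sub_cancel]; ring
    _ ≤ _ := by
        have : ((n : ℝ≥0∞) + 1) * ENNReal.ofReal (sc n) = 1 := by
          have e : (n : ℝ≥0∞) + 1 = ENNReal.ofReal ((n:ℝ) + 1) := by
            rw [ENNReal.ofReal_add (by positivity) zero_le_one]; simp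
          rw [e, ← ENNReal.ofReal_mul (by positivity)]
          have : ((n:ℝ) + 1) * sc n = 1 := by unfold sc; field_simp
          rw [this, ENNReal.ofReal_one]
        rw [this, mul_one]

lemma exists_t {μ : Measure X} [SFinite μ] {K : Set X} (hK : IsClosed K) {g : X → ℝ≥0∞}
    (hg : Measurable g) : ∃ t ∈ Ioo (1 / 4 : ℝ) (1 / 2),
      liminf (fun n => ∫⁻ x, gn K g t n x ∂μ) atTop ≤ 4 * ∫⁻ x in Kᶜ, (1 + g x) ∂μ := by
  have hv : volume (Ioo (1 / 4 : ℝ) (1 / 2)) = ENNReal.ofReal (1 / 4) := by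
    rw [Real.volume_Ioo]; norm_num
  have hm : ∀ n, Measurable (fun t => ∫⁻ x, gn K g t n x ∂μ) := fun n =>
    (gn_meas hK hg n).lintegral_prod_right'
  obtain ⟨t, ht, h⟩ := exists_le_setLAverage (μ := volume) (s := Ioo (1 / 4 : ℝ) (1 / 2))
    (f := fun t => liminf (fun n => ∫⁻ x, gn K g t n x ∂μ) atTop)
    (by rw [hv]; simp) (by rw [hv]; simp) (Measurable.liminf hm).aemeasurable
  refine ⟨t, ht, h.trans ?_⟩
  rw [setLAverage_eq, hv]
  refine ENNReal.div_le_of_le_mul ?_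
  have e : (4 * ∫⁻ x in Kᶜ, (1 + g x) ∂μ) * ENNReal.ofReal (1 / 4) = ∫⁻ x in Kᶜ, (1 + g x) ∂μ := by
    rw [mul_right_comm]
    have : (4 : ℝ≥0∞) * ENNReal.ofReal (1 / 4) = 1 := by
      rw [show (4 : ℝ≥0∞) = ENNReal.ofReal 4 by simp, ← ENNReal.ofReal_mul (by norm_num)]
      norm_num
    rw [this, one_mul]
  rw [e]
  refine (lintegral_liminf_le hm).trans ?_
  refine (liminf_le_liminf (Eventually.of_forall fun n => gn_avg hK hg n)).trans ?_
  simp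

lemma wn_tendsto (K : Set X) (g : X → ℝ≥0∞) (t : ℝ) (x : X) :
    ∀ᶠ n in atTop, wn K g t n x = (Vt K g t).indicator (fun _ => (1:ℝ)) x := by
  by_cases hx : x ∈ Vt K g t
  · rw [indicator_of_mem hx]
    obtain ⟨m, hm⟩ := hx
    obtain ⟨N, hN⟩ := exists_nat_gt (1 / (vr K g m x - t))
    filter_upwards [eventually_ge_atTop m, eventually_ge_atTop N] with n h1 h2
    have hpos : 0 < vr K g m x - t := by linarith
    rw [div_lt_iff₀ hpos] at hN
    have h3 : (N : ℝ) ≤ n := by exact_mod_cast h2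
    have h4 := vr_mono K g h1 x
    have h5 : 1 ≤ ((n:ℝ) + 1) * (vr K g n x - t) := by
      calc 1 ≤ (N:ℝ) * (vr K g m x - t) := hN.le
        _ ≤ _ := by gcongr; linarith
    unfold wn
    rw [min_eq_left h5]; simp
  · rw [indicator_of_notMem hx]
    refine Eventually.of_forall fun n => ?_
    have : vr K g n x ≤ t := by
      by_contra hcon
      exact hx ⟨n, not_le.1 hcon⟩
    unfold wn
    refine max_eq_left ((min_le_right _ _).trans ?_)
    have hn : (0:ℝ) < (n:ℝ) + 1 := by positivity
    nlinarith

lemma perim_Vt {μ : Measure X} [ProperSpace X] {Cd : ℝ} (hD : Doubling μ Cd) {K : Set X}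
    (hK : IsClosed K) {g : X → ℝ≥0∞} (hg : Measurable g) {t : ℝ} (ht : 0 ≤ t)
    (hf : ∫⁻ x in Kᶜ, (1 + g x) ∂μ < ∞) :
    perimOpen μ (Vt K g t) univ ≤ liminf (fun n => ∫⁻ x, gn K g t n x ∂μ) atTop := by
  have hm : ∀ n, Measurable (gn K g t n) := fun n =>
    (gn_meas hK hg n).comp (measurable_const.prodMk measurable_id)
  have h1 : ∀ n, ∃ g', IsMinimalWUG μ (wn K g t n) g' univ ∧
      ∫⁻ x, g' x ∂μ ≤ ∫⁻ x, gn K g t n x ∂μ := by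
    intro n
    refine exists_minimal (wn_lip K g t n) (wug_of_ug (hm n) (wn_ug K g ht n)) ?_
    refine (gn_int_le hK hg t n).trans_lt (ENNReal.mul_lt_top ?_ hf)
    exact ENNReal.add_lt_top.2 ⟨ENNReal.natCast_lt_top n, ENNReal.one_lt_top⟩
  choose g' hg1 hg2 using h1
  unfold perimOpen tvOpen
  refine iInf_le_of_le (wn K g t) (iInf_le_of_le g' (iInf_le_of_le ?_ (iInf₂_le_of_le hg1 ?_ ?_)))
  · exact fun n x _ => ⟨1, one_pos, _, (wn_lip K g t n).lipschitzOnWith⟩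
  · intro x _
    refine ⟨1, one_pos, ?_⟩
    rw [univ_inter]
    have := tendsto_lintegral_of_dominated_convergence (μ := μ.restrict (ball x 1))
      (F := fun n y => ENNReal.ofReal |wn K g t n y - (Vt K g t).indicator (fun _ => (1:ℝ)) y|)
      (f := fun _ => 0) (fun _ => 1) (fun n => by
        refine ENNReal.measurable_ofReal.comp (Measurable.abs ?_)
        exact (wn_lip K g t n).continuous.measurable.sub
          (measurable_const.indicator (isOpen_Vt K g t).measurableSet))
      (fun n => Eventually.of_forall fun y => by
        refine ENNReal.ofReal_le_one.2 ?_
        have h1 := wn_nonneg K g t n y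
        have h2 := wn_le_one K g t n y
        by_cases hy : y ∈ Vt K g t
        · rw [indicator_of_mem hy, abs_le]; constructor <;> linarith
        · rw [indicator_of_notMem hy, abs_le]; constructor <;> linarith)
      (by simpa using (hD.fin x 1).ne)
      (Eventually.of_forall fun y => by
        refine tendsto_const_nhds.congr' ?_
        filter_upwards [wn_tendsto K g t y] with n hn
        rw [hn]; simp)
    simpa using this
  · rw [Measure.restrict_univ]
    exact liminf_le_liminf (Eventually.of_forall hg2)

lemma sub_Vt [ProperSpace X] {K : Set X} (hK : IsClosed K) {g : X → ℝ≥0∞}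
    (hg : LowerSemicontinuous g) {u : X → ℝ} (hu : ∀ γ, UGIneq u g γ) (huK : ∀ x ∈ K, u x ≤ 1 / 4)
    {G : Set X} (hG : ∀ x ∈ G, 1 ≤ u x) {t : ℝ} (ht : t < 1 / 2) : G ⊆ Vt K g t := by
  intro x hx
  by_contra hcon
  have h1 : ∀ n, vr K g n x ≤ t := fun n => by
    by_contra h; exact hcon ⟨n, not_le.1 h⟩
  obtain ⟨γ, e1, e2, e3⟩ := exists_curve hK hg (x := x) (a := ENNReal.ofReal (1 / 2))
    (ENNReal.ofReal_le_one.2 (by norm_num)) (fun n => by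
      rw [ENNReal.lt_ofReal_iff_toReal_lt (cd_ne_top _ _ _ _)]
      exact lt_of_le_of_lt (h1 n) ht)
  have h2 := hu γ
  unfold UGIneq at h2
  rw [e2] at h2
  have h3 : ENNReal.ofReal |u (γ.toFun 0) - u x| ≤ ENNReal.ofReal (1 / 2) :=
    h2.trans (le_trans (lintegral_mono fun t => le_add_self) e3)
  rw [ENNReal.ofReal_le_ofReal_iff (by norm_num)] at h3
  have := huK _ e1
  have := hG x hx
  have := (abs_le.1 h3).1
  linarith

theorem main_aux {Y : Type*} [MetricSpace Y] [MeasurableSpace Y] [BorelSpace Y] (ν : Measure Y)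
    {Cd CP lam : ℝ} (hcomp : CompleteSpace Y) (hD : Doubling ν Cd) (hP : Poincare ν CP lam)
    (G : Set Y) (ε : ℝ) (hε : 0 < ε) :
    ∃ V : Set Y, IsOpen V ∧ G ⊆ V ∧
      capa1 ν V ≤ ENNReal.ofReal 100 * (capa1 ν G + ENNReal.ofReal ε) ∧
      perimOpen ν V Set.univ ≤ ENNReal.ofReal 100 * (capa1 ν G + ENNReal.ofReal ε) := by
  by_cases htop : capa1 ν G = ∞
  · have : ENNReal.ofReal 100 * (capa1 ν G + ENNReal.ofReal ε) = ∞ := by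
      rw [htop, top_add, ENNReal.mul_top]; simp
    rw [this]
    exact ⟨univ, isOpen_univ, subset_univ _, le_top, le_top⟩
  have hproper := hD.proper
  have hlf := hD.locFin
  set e := ENNReal.ofReal ε with he
  have he0 : e ≠ 0 := (ENNReal.ofReal_pos.2 hε).ne'
  set B := capa1 ν G + e with hB
  have heB : e ≤ B := le_add_self
  have hBt : B < ∞ := ENNReal.add_lt_top.2 ⟨lt_top_iff_ne_top.2 htop, ENNReal.ofReal_lt_top⟩
  have h1 : capa1 ν G < B := ENNReal.lt_add_right htop he0
  obtain ⟨u, hu1⟩ := iInf_lt_iff.1 h1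
  obtain ⟨_, hu2⟩ := iInf_lt_iff.1 hu1
  obtain ⟨huG, huB⟩ := iInf_lt_iff.1 hu2
  unfold NNorm at huB
  rw [Measure.restrict_univ] at huB
  have hI1 : ∫⁻ x, ENNReal.ofReal |u x| ∂ν ≤ B := le_self_add.trans huB.le
  have hI2 := lt_of_le_of_lt le_add_self huB
  obtain ⟨g0, hg0⟩ := iInf_lt_iff.1 hI2
  obtain ⟨hw0, hg0B⟩ := iInf_lt_iff.1 hg0
  obtain ⟨g, hg, hug, hgi⟩ := exists_lsc_ug hw0 he0
  have hgi' : ∫⁻ x, g x ∂ν ≤ 3 * B := by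
    refine hgi.trans ?_
    calc _ ≤ B + B + B := by gcongr
      _ = _ := by ring
  have hgt : ∫⁻ x, g x ∂ν < ∞ := hgi'.trans_lt (ENNReal.mul_lt_top (by simp) hBt)
  obtain ⟨U, hUo, hUm, hUu⟩ := exists_open_small hD hP hg hgt.ne hug he0
  have hUm' : ν U ≤ 5 * B := by
    refine hUm.trans ?_
    calc _ ≤ 4 * B + B := by gcongr
      _ = _ := by ring
  set K := Uᶜ with hKdef
  have hK : IsClosed K := hUo.isClosed_compl
  have hKc : Kᶜ = U := compl_compl U
  have hM : ∫⁻ x in Kᶜ, (1 + g x) ∂ν ≤ 8 * B := by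
    rw [hKc, lintegral_add_left measurable_const, setLIntegral_const, one_mul]
    calc _ ≤ 5 * B + 3 * B := add_le_add hUm' ((setLIntegral_le_lintegral _ _).trans hgi')
      _ = _ := by ring
  have hMt : ∫⁻ x in Kᶜ, (1 + g x) ∂ν < ∞ := hM.trans_lt (ENNReal.mul_lt_top (by simp) hBt)
  obtain ⟨t, ht, hlim⟩ := exists_t (μ := ν) hK hg.measurable
  have h52 : 4 * ν Kᶜ + 4 * ∫⁻ x in Kᶜ, (1 + g x) ∂ν ≤ 52 * B := by
    calc _ ≤ 4 * (5 * B) + 4 * (8 * B) := by rw [hKc] at *; gcongr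
      _ = _ := by ring
  have h100 : ENNReal.ofReal 100 = 100 := by simp
  refine ⟨Vt K g t, isOpen_Vt K g t, sub_Vt hK hg hug (fun x hx => hUu x hx) huG ht.2, ?_, ?_⟩
  · refine (capa_Vt hK hg.measurable ht.1.le
      (h52.trans_lt (ENNReal.mul_lt_top (by simp) hBt))).trans (h52.trans ?_)
    rw [h100]; gcongr; norm_num
  · refine (perim_Vt hD hK hg.measurable (by linarith [ht.1]) hMt).trans (hlim.trans ?_)
    calc _ ≤ 4 * (8 * B) := by gcongr
      _ = 32 * B := by ring
      _ ≤ _ := by rw [h100]; gcongr; norm_num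

/-- There is a constant `C₁ = C₁(C_d, C_P, λ) ≥ 1` such that for any
`G ⊆ X` and `ε > 0` there is an open `V ⊇ G` with `capa₁(V) ≤ C₁(capa₁(G) + ε)` and
`P(V, X) ≤ C₁(capa₁(G) + ε)`. -/
theorem exists_open_cover_of_finite_perimeter (Cd CP lam : ℝ) :
    ∃ C1 : ℝ, 1 ≤ C1 ∧
      ∀ (Y : Type) [MetricSpace Y] [MeasurableSpace Y] [BorelSpace Y] (ν : Measure Y),
        CompleteSpace Y → Doubling ν Cd → Poincare ν CP lam →
        ∀ (G : Set Y) (ε : ℝ), 0 < ε →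
          ∃ V : Set Y, IsOpen V ∧ G ⊆ V ∧
            capa1 ν V ≤ ENNReal.ofReal C1 * (capa1 ν G + ENNReal.ofReal ε) ∧
            perimOpen ν V Set.univ ≤ ENNReal.ofReal C1 * (capa1 ν G + ENNReal.ofReal ε) := by
  exact ⟨100, by norm_num, fun Y _ _ _ ν hc hD hP G ε hε => main_aux ν hc hD hP G ε hε⟩

end PaperBV
end
end

section
/- Every 1-quasiopen set U ⊂ X is μ-measurable. -/
open MeasureTheory Filter Metric Set
open scoped Topology ENNReal NNReal symmDiff

noncomputable section

namespace PaperBV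

variable {X : Type*} [MetricSpace X] [MeasurableSpace X] [BorelSpace X]

theorem measure_le_capa1 (μ : Measure X) (G : Set X) (hG : IsOpen G) : μ G ≤ capa1 μ G := by
  unfold capa1
  refine le_iInf fun u => le_iInf fun _ => le_iInf fun hu => ?_
  unfold NNorm
  refine le_trans ?_ le_self_add
  rw [Measure.restrict_univ, ← lintegral_indicator_one hG.measurableSet]
  refine lintegral_mono fun x => ?_
  by_cases hx : x ∈ G
  · simp only [Set.indicator_of_mem hx, Pi.one_apply]
    rw [← ENNReal.ofReal_one]
    exact ENNReal.ofReal_le_ofReal ((hu x hx).trans (le_abs_self _))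
  · simp [Set.indicator_of_notMem hx]

/-- Every `1`-quasiopen set is `μ`-measurable. -/
theorem quasiopen_measurable
    (μ : Measure X) (hcomp : CompleteSpace X)
    (hdoub : ∃ Cd : ℝ, Doubling μ Cd) (hpoin : ∃ CP lam : ℝ, Poincare μ CP lam)
    (U : Set X) (hU : QuasiOpen μ U) :
    NullMeasurableSet U μ := by
  have h : ∀ n : ℕ, ∃ G : Set X, IsOpen G ∧ capa1 μ G < ENNReal.ofReal (1 / ((n : ℝ) + 1)) ∧
      IsOpen (U ∪ G) := fun n => hU _ (by positivity)
  choose G hGo hGc hUG using h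
  have hnull : μ (⋂ n, G n) = 0 := by
    have hlim : Tendsto (fun n : ℕ => ENNReal.ofReal (1 / ((n : ℝ) + 1))) atTop (𝓝 0) := by
      simpa using ENNReal.tendsto_ofReal (tendsto_one_div_add_atTop_nhds_zero_nat (𝕜 := ℝ))
    refine le_antisymm (ge_of_tendsto' hlim fun n => ?_) zero_le
    exact (measure_mono (iInter_subset _ n)).trans
      ((measure_le_capa1 μ (G n) (hGo n)).trans (hGc n).le)
  have hV : MeasurableSet (⋂ n, (U ∪ G n)) := MeasurableSet.iInter fun n => (hUG n).measurableSet
  rw [← Set.union_iInter] at hV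
  exact hV.nullMeasurableSet.congr (union_ae_eq_left_of_ae_eq_empty (ae_eq_empty.2 hnull))

end PaperBV
end
end
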